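/- arXiv:1307.5398 — 2 statements merged into one kernel-verified Lean document; each statement's English description precedes it below -/
import Mathlib

section
/- For any bounded real potentials V and Vtilde, any time steps tau_m > 0, any initial data Psi^0_h in H_h and any sources F^m in H_h (m >= 1), the splitting scheme has exactly one solution: there exist families (Psi_breve^m)_{m>=1}, (Psi_tilde^m)_{m>=1}, (Psi^m)_{m>=0}, all in H_h, satisfying equations (i)-(iii) with Psi^0 = Psi^0_h, and any two such families coincide. -/
/-!
The half-steps (i) and (iii) are pointwise: each amounts to multiplication by the unimodular
Cayley factor `cay`, so they have exactly one solution and preserve square summability.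

The middle step (ii) is an equation in `ℓ²` over the interior nodes (`Hil K`). There
`h_x² ∂_x ∂̄_x = S + S† - 2`, where `S` is a compressed shift with `‖S‖ ≤ 1`; likewise in `y`.
Consequently both second differences are self-adjoint with norm at most `4`, and they commute.
Hence `s_N` is self-adjoint and `‖1 - s_N‖ ≤ 2/3`, so it is invertible; `Δ_{hN}` is self-adjoint and
commutes with `s_N`. Although `s_N Ṽ` is not self-adjoint, multiplying (ii) by `s_N⁻¹` leaves
`(iħ/τ - A) U = (iħ/τ + A) W + s_N⁻¹ F` with `A = (-c s_N⁻¹ Δ_{hN} + Ṽ) / 2` self-adjoint, and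
`iħ/τ` is not in the (real) spectrum of `A` (`cayley_step`).

Mesh functions are compared with vectors of `Hil K` through `Rep`, which ignores the values at
`k > K`. The result follows by induction on the time level.
-/

noncomputable section

/-- Second difference quotient in `x`, with output set to `0` at the boundary
indices `j = 0`, `k = 0`, `k = K` (and, harmlessly, off the mesh `k > K`). -/
def ddx (K : ℕ) (hx : ℝ) (W : ℕ → ℕ → ℂ) : ℕ → ℕ → ℂ := fun j k =>
  if j = 0 ∨ k = 0 ∨ K ≤ k then 0
  else (W (j + 1) k - 2 * W j k + W (j - 1) k) / (hx : ℂ) ^ 2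

/-- Second difference quotient in `y`, with output set to `0` at the boundary. -/
def ddy (K : ℕ) (hy : ℝ) (W : ℕ → ℕ → ℂ) : ℕ → ℕ → ℂ := fun j k =>
  if j = 0 ∨ k = 0 ∨ K ≤ k then 0
  else (W j (k + 1) - 2 * W j k + W j (k - 1)) / (hy : ℂ) ^ 2

/-- Numerov average in `x`: `s_{Nx} = I + (h_x^2/12) ∂_x ∂̄_x`. -/
def sNx (K : ℕ) (hx : ℝ) (W : ℕ → ℕ → ℂ) : ℕ → ℕ → ℂ := fun j k =>
  W j k + ((hx ^ 2 / 12 : ℝ) : ℂ) * ddx K hx W j k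

/-- Numerov average in `y`: `s_{Ny} = I + (h_y^2/12) ∂_y ∂̄_y`. -/
def sNy (K : ℕ) (hy : ℝ) (W : ℕ → ℕ → ℂ) : ℕ → ℕ → ℂ := fun j k =>
  W j k + ((hy ^ 2 / 12 : ℝ) : ℂ) * ddy K hy W j k

/-- The full Numerov average `s_N = I + (h_x^2/12) ∂_x ∂̄_x + (h_y^2/12) ∂_y ∂̄_y`. -/
def sN (K : ℕ) (hx hy : ℝ) (W : ℕ → ℕ → ℂ) : ℕ → ℕ → ℂ := fun j k =>
  W j k + ((hx ^ 2 / 12 : ℝ) : ℂ) * ddx K hx W j k + ((hy ^ 2 / 12 : ℝ) : ℂ) * ddy K hy W j k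

/-- The Numerov discretization `Δ_{hN} = s_{Ny} ∂_x ∂̄_x + s_{Nx} ∂_y ∂̄_y` of the Laplacian. -/
def deltaHN (K : ℕ) (hx hy : ℝ) (W : ℕ → ℕ → ℂ) : ℕ → ℕ → ℂ := fun j k =>
  sNy K hy (ddx K hx W) j k + sNx K hx (ddy K hy W) j k

/-- Membership in the Hilbert space `H_h` of mesh functions on the semi-infinite strip:
vanishing at `j = 0`, `k = 0`, `k = K`, and square-summable. -/
def memH (K : ℕ) (W : ℕ → ℕ → ℂ) : Prop :=
  (∀ k, W 0 k = 0) ∧ (∀ j, W j 0 = 0) ∧ (∀ j, W j K = 0) ∧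
    Summable fun j : ℕ => ∑ k ∈ Finset.Icc 1 (K - 1), ‖W j k‖ ^ 2

/-- The inner product `(U,W)_{H_h} = ∑_{j ≥ 1} ∑_{k=1}^{K-1} U_{j,k} conj(W_{j,k}) h_x h_y`. -/
def innH (K : ℕ) (hx hy : ℝ) (U W : ℕ → ℕ → ℂ) : ℂ :=
  ∑' j : ℕ, ∑ k ∈ Finset.Icc 1 (K - 1),
    U (j + 1) k * (starRingEnd ℂ) (W (j + 1) k) * ((hx * hy : ℝ) : ℂ)

/-- The norm `‖W‖_{H_h}`. -/
def nrmH (K : ℕ) (hx hy : ℝ) (W : ℕ → ℕ → ℂ) : ℝ :=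
  Real.sqrt (innH K hx hy W W).re

/-- The three-step Strang splitting scheme on the infinite space mesh: the families
`PsiB = Ψ̆`, `PsiT = Ψ̃` (for `m ≥ 1`) and `Psi = Ψ` (for `m ≥ 0`), all in `H_h`,
satisfy equations (i)-(iii) at every interior node `(j ≥ 1, 1 ≤ k ≤ K-1)`. -/
def SplitSol (K : ℕ) (hx hy hbar ch : ℝ) (V : ℕ → ℕ → ℝ) (Vt : ℕ → ℝ)
    (tau : ℕ → ℝ) (F : ℕ → ℕ → ℕ → ℂ)
    (PsiB PsiT Psi : ℕ → ℕ → ℕ → ℂ) : Prop :=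
  (∀ m, 1 ≤ m → memH K (PsiB m)) ∧
  (∀ m, 1 ≤ m → memH K (PsiT m)) ∧
  (∀ m, memH K (Psi m)) ∧
  -- (i)
  (∀ m, 1 ≤ m → ∀ j k, 1 ≤ j → 1 ≤ k → k ≤ K - 1 →
    Complex.I * (hbar : ℂ) * (PsiB m j k - Psi (m - 1) j k) / ((tau m / 2 : ℝ) : ℂ)
      = ((V j k - Vt j : ℝ) : ℂ) * ((PsiB m j k + Psi (m - 1) j k) / 2)) ∧
  -- (ii)
  (∀ m, 1 ≤ m → ∀ j k, 1 ≤ j → 1 ≤ k → k ≤ K - 1 →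
    Complex.I * (hbar : ℂ)
        * sN K hx hy (fun j' k' => PsiT m j' k' - PsiB m j' k') j k / ((tau m : ℝ) : ℂ)
      = -(ch : ℂ) * deltaHN K hx hy (fun j' k' => (PsiT m j' k' + PsiB m j' k') / 2) j k
        + sN K hx hy (fun j' k' => (Vt j' : ℂ) * ((PsiT m j' k' + PsiB m j' k') / 2)) j k
        + F m j k) ∧
  -- (iii)
  (∀ m, 1 ≤ m → ∀ j k, 1 ≤ j → 1 ≤ k → k ≤ K - 1 →
    Complex.I * (hbar : ℂ) * (Psi m j k - PsiT m j k) / ((tau m / 2 : ℝ) : ℂ)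
      = ((V j k - Vt j : ℝ) : ℂ) * ((Psi m j k + PsiT m j k) / 2))

namespace StripScheme

/-! ### Bounded operators on `ℓ²` of the interior nodes -/

/-- The interior nodes `j ≥ 1`, `1 ≤ k ≤ K - 1` of the strip. -/
abbrev Node (K : ℕ) : Type := {p : ℕ × ℕ // 0 < p.1 ∧ 0 < p.2 ∧ p.2 < K}

/-- The Hilbert space `ℓ²` over the interior nodes. -/
abbrev Hil (K : ℕ) : Type := lp (fun _ : Node K => ℂ) 2

/-- Extension by zero from the interior nodes to `ℕ × ℕ`. -/
def ext {K : ℕ} (f : Node K → ℂ) (q : ℕ × ℕ) : ℂ :=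
  if h : 0 < q.1 ∧ 0 < q.2 ∧ q.2 < K then f ⟨q, h⟩ else 0

lemma ext_node {K : ℕ} (f : Node K → ℂ) (p : Node K) : ext f p.1 = f p := by
  simp only [ext, dif_pos p.2]

lemma ext_of_not {K : ℕ} (f : Node K → ℂ) {q : ℕ × ℕ} (h : ¬(0 < q.1 ∧ 0 < q.2 ∧ q.2 < K)) :
    ext f q = 0 := dif_neg h

lemma ext_add {K : ℕ} (f g : Node K → ℂ) (q : ℕ × ℕ) :
    ext (f + g) q = ext f q + ext g q := by
  unfold ext; split_ifs <;> simp

lemma ext_smul {K : ℕ} (c : ℂ) (f : Node K → ℂ) (q : ℕ × ℕ) :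
    ext (c • f) q = c * ext f q := by
  unfold ext; split_ifs <;> simp

lemma ext_sub {K : ℕ} (f g : Node K → ℂ) (q : ℕ × ℕ) :
    ext (f - g) q = ext f q - ext g q := by
  unfold ext; split_ifs <;> simp

lemma support_ext_sq {K : ℕ} (f : Node K → ℂ) :
    ∀ q ∉ Set.range (Subtype.val : Node K → ℕ × ℕ), ‖ext f q‖ ^ 2 = 0 := by
  intro q hq
  rw [ext_of_not]
  · simp
  · intro h; exact hq ⟨⟨q, h⟩, rfl⟩

lemma summable_node (f : Node K → ℂ) :
    Summable (fun p => ‖f p‖ ^ 2) ↔ Summable (fun q => ‖ext f q‖ ^ 2) := by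
  rw [← Subtype.val_injective.summable_iff (support_ext_sq f)]
  simp only [Function.comp_def, ext_node]

lemma memℓp_iff (f : Node K → ℂ) : Memℓp f 2 ↔ Summable (fun p => ‖f p‖ ^ 2) := by
  rw [memℓp_gen_iff (by norm_num)]
  norm_num

lemma norm_sq_eq (f : Hil K) : ‖f‖ ^ 2 = ∑' q, ‖ext f q‖ ^ 2 := by
  have h := lp.norm_rpow_eq_tsum (p := 2) (by norm_num) f
  norm_num at h
  rw [h, ← (Subtype.val_injective (p := fun q : ℕ × ℕ => 0 < q.1 ∧ 0 < q.2 ∧ q.2 < K)).tsum_eq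
    (f := fun q => ‖ext f q‖ ^ 2)]
  · simp only [ext_node]
  · exact Function.support_subset_iff'.2 (support_ext_sq f)

lemma summable_ext (f : Hil K) : Summable (fun q => ‖ext f q‖ ^ 2) :=
  (summable_node _).1 ((memℓp_iff _).1 (lp.memℓp f))

section weighted
variable {K : ℕ} (w : Node K → ℂ) (C : ℝ) (hw : ∀ p, ‖w p‖ ≤ C) (φ : ℕ × ℕ → ℕ × ℕ)
  (hφ : Function.Injective φ)

include hφ in
lemma summable_comp (f : Hil K) : Summable (fun p : Node K => ‖ext f (φ p.1)‖ ^ 2) :=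
  (summable_ext f).comp_injective (hφ.comp Subtype.val_injective)

include hw in
lemma weighted_le (f : Hil K) (p : Node K) :
    ‖w p * ext f (φ p.1)‖ ^ 2 ≤ C ^ 2 * ‖ext f (φ p.1)‖ ^ 2 := by
  rw [norm_mul, mul_pow]
  gcongr
  exact hw p

include hw hφ in
lemma weighted_summable (f : Hil K) :
    Summable (fun p : Node K => ‖w p * ext f (φ p.1)‖ ^ 2) :=
  Summable.of_nonneg_of_le (fun _ => by positivity) (weighted_le w C hw φ f)
    ((summable_comp φ hφ f).mul_left _)

/-- The bounded operator `(T f)(p) = w(p) f(φ(p))`, with `f` extended by zero, for a bounded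
weight `w` and an injective map `φ` of the lattice. Shifts and multiplication operators are both
of this form. -/
def weighted : Hil K →L[ℂ] Hil K :=
  LinearMap.mkContinuous
    { toFun := fun f => ⟨fun p => w p * ext f (φ p.1),
        (memℓp_iff _).2 (weighted_summable w C hw φ hφ f)⟩
      map_add' := by
        intro f g; ext p
        simp only [lp.coeFn_add, Pi.add_apply, ext_add]; ring
      map_smul' := by
        intro c f; ext p
        simp only [lp.coeFn_smul, Pi.smul_apply, ext_smul, smul_eq_mul, RingHom.id_apply]; ring }
    |C| (by
      intro f
      apply lp.norm_le_of_tsum_le (by norm_num) (by positivity)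
      norm_num
      rw [mul_pow, sq_abs, norm_sq_eq, ← tsum_mul_left]
      calc _ ≤ ∑' p : Node K, C ^ 2 * ‖ext f (φ p.1)‖ ^ 2 := by
            apply Summable.tsum_le_tsum _ _ ((summable_comp φ hφ f).mul_left _)
            · intro p
              simpa [mul_pow] using weighted_le w C hw φ f p
            · simpa [mul_pow] using weighted_summable w C hw φ hφ f
        _ ≤ _ := by
            exact tsum_comp_le_tsum_of_inj (f := fun q => C ^ 2 * ‖ext f q‖ ^ 2)
              ((summable_ext f).mul_left _) (fun _ => by positivity)
              (hφ.comp Subtype.val_injective))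

lemma weighted_apply (f : Hil K) (p : Node K) :
    weighted w C hw φ hφ f p = w p * ext f (φ p.1) := rfl

lemma weighted_norm : ‖weighted w C hw φ hφ‖ ≤ |C| :=
  LinearMap.mkContinuous_norm_le _ (abs_nonneg _) _

end weighted

/-! ### Compressed shifts -/

/-- Translation along an injective lattice map `φ`, compressed to the interior nodes. -/
def shift (K : ℕ) (φ : ℕ × ℕ → ℕ × ℕ) (hφ : Function.Injective φ) : Hil K →L[ℂ] Hil K :=
  weighted (fun _ => 1) 1 (by simp) φ hφ

lemma shift_norm (φ : ℕ × ℕ → ℕ × ℕ) (hφ : Function.Injective φ) : ‖shift K φ hφ‖ ≤ 1 :=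
  (weighted_norm _ _ _ _ _).trans (by simp)

lemma shift_apply (φ : ℕ × ℕ → ℕ × ℕ) (hφ : Function.Injective φ) (f : Hil K) (p : Node K) :
    shift K φ hφ f p = ext f (φ p.1) := by
  simp [shift, weighted_apply]

open scoped InnerProductSpace in
/-- The adjoint of a compressed translation is the translation along the (partial) inverse map:
test against the coordinate vector at `p`. -/
lemma shift_adjoint_apply (φ ψ : ℕ × ℕ → ℕ × ℕ) (hφ : Function.Injective φ) (p : Node K)
    (h : ∀ q : Node K, φ q.1 = p.1 ↔ q.1 = ψ p.1) (f : Hil K) :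
    (shift K φ hφ).adjoint f p = ext f (ψ p.1) := by
  classical
  have h1 : ∀ g : Hil K, g p = ⟪(lp.single 2 p (1 : ℂ) : Hil K), g⟫_ℂ := by
    intro g; rw [lp.inner_single_left]; simp
  rw [h1, ContinuousLinearMap.adjoint_inner_right]
  have h2 : ∀ q : Node K, shift K φ hφ (lp.single 2 p (1 : ℂ)) q = if q.1 = ψ p.1 then 1 else 0 := by
    intro q
    rw [shift_apply]
    simp only [← h q]
    unfold ext
    split_ifs with a b b
    · rw [lp.single_apply]
      have : (⟨φ q.1, a⟩ : Node K) = p := Subtype.ext b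
      rw [this]; simp
    · rw [lp.single_apply, Pi.single_eq_of_ne]
      intro e; exact b (congrArg Subtype.val e)
    · exact absurd (b ▸ p.2) a
    · rfl
  by_cases hn : 0 < (ψ p.1).1 ∧ 0 < (ψ p.1).2 ∧ (ψ p.1).2 < K
  · have : shift K φ hφ (lp.single 2 p (1 : ℂ)) = lp.single 2 (⟨ψ p.1, hn⟩ : Node K) (1 : ℂ) := by
      ext q
      rw [h2, lp.single_apply, Pi.single_apply]
      simp only [Subtype.ext_iff]
    rw [this, lp.inner_single_left, ext, dif_pos hn]
    simp
  · have : shift K φ hφ (lp.single 2 p (1 : ℂ)) = 0 := by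
      ext q
      rw [h2, if_neg]
      · rfl
      · intro e; exact hn (e ▸ q.2)
    rw [this, ext_of_not _ hn, inner_zero_left]

lemma inj_x : Function.Injective (fun q : ℕ × ℕ => (q.1 + 1, q.2)) := by
  rintro ⟨a, b⟩ ⟨c, d⟩ h; simpa using h

lemma inj_y : Function.Injective (fun q : ℕ × ℕ => (q.1, q.2 + 1)) := by
  rintro ⟨a, b⟩ ⟨c, d⟩ h; simpa using h

/-- Forward shift in `x`. -/
def Sx (K : ℕ) : Hil K →L[ℂ] Hil K := shift K _ inj_x

/-- Forward shift in `y`. -/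
def Sy (K : ℕ) : Hil K →L[ℂ] Hil K := shift K _ inj_y

lemma Sx_apply (f : Hil K) (p : Node K) : Sx K f p = ext f (p.1.1 + 1, p.1.2) :=
  shift_apply _ _ _ _

lemma Sy_apply (f : Hil K) (p : Node K) : Sy K f p = ext f (p.1.1, p.1.2 + 1) :=
  shift_apply _ _ _ _

lemma Sx_adj_apply (f : Hil K) (p : Node K) :
    (Sx K).adjoint f p = ext f (p.1.1 - 1, p.1.2) := by
  refine shift_adjoint_apply _ (fun q => (q.1 - 1, q.2)) _ _ ?_ _
  rintro ⟨⟨a, b⟩, hq⟩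
  obtain ⟨⟨c, d⟩, hp⟩ := p
  simp only [Prod.mk.injEq] at *
  omega

lemma Sy_adj_apply (f : Hil K) (p : Node K) :
    (Sy K).adjoint f p = ext f (p.1.1, p.1.2 - 1) := by
  refine shift_adjoint_apply _ (fun q => (q.1, q.2 - 1)) _ _ ?_ _
  rintro ⟨⟨a, b⟩, hq⟩
  obtain ⟨⟨c, d⟩, hp⟩ := p
  simp only [Prod.mk.injEq] at *
  omega

lemma Sx_norm : ‖Sx K‖ ≤ 1 := shift_norm _ _
lemma Sy_norm : ‖Sy K‖ ≤ 1 := shift_norm _ _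

lemma commute_Sx_Sy : Commute (Sx K) (Sy K) := by
  ext f p
  change Sx K (Sy K f) p = Sy K (Sx K f) p
  obtain ⟨⟨a, b⟩, hp⟩ := p
  rw [Sx_apply, Sy_apply]
  unfold ext
  simp only [Sx_apply, Sy_apply]
  unfold ext
  simp only at hp ⊢
  split_ifs <;> first | rfl | omega

lemma commute_Sx_Sy_adj : Commute (Sx K) (Sy K).adjoint := by
  ext f p
  change Sx K ((Sy K).adjoint f) p = (Sy K).adjoint (Sx K f) p
  obtain ⟨⟨a, b⟩, hp⟩ := p
  rw [Sx_apply, Sy_adj_apply]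
  unfold ext
  simp only [Sx_apply, Sy_adj_apply]
  unfold ext
  simp only at hp ⊢
  split_ifs <;> first | rfl | omega

/-! ### Self-adjoint operators and the Cayley transform -/

section abstract
variable {H : Type*} [NormedAddCommGroup H] [InnerProductSpace ℂ H] [CompleteSpace H]

/-- The undivided second difference `S + S† - 2` built from a shift `S`. -/
def secondDiff (S : H →L[ℂ] H) : H →L[ℂ] H := S + star S - (2 : ℂ) • 1

lemma secondDiff_selfAdjoint (S : H →L[ℂ] H) : IsSelfAdjoint (secondDiff S) := by
  unfold secondDiff IsSelfAdjoint
  simp only [star_sub, star_add, star_star, star_smul, star_one]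
  rw [add_comm]
  simp

lemma secondDiff_norm {S : H →L[ℂ] H} (h : ‖S‖ ≤ 1) : ‖secondDiff S‖ ≤ 4 := by
  have h1 : ‖star S‖ ≤ 1 := by rwa [norm_star]
  have h2 : ‖(2 : ℂ) • (1 : H →L[ℂ] H)‖ ≤ 2 := by
    rw [norm_smul]
    have : ‖(1 : H →L[ℂ] H)‖ ≤ 1 := ContinuousLinearMap.norm_id_le
    norm_num
    linarith
  unfold secondDiff
  linarith [norm_sub_le (S + star S) ((2 : ℂ) • 1), norm_add_le S (star S)]

lemma commute_secondDiff_of {S T : H →L[ℂ] H} (h1 : Commute S T) (h2 : Commute S (star T)) :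
    Commute (secondDiff S) (secondDiff T) := by
  have h3 : Commute (star S) T := by simpa using h2.star_star
  have h4 := h1.star_star
  unfold secondDiff
  refine Commute.sub_left (Commute.add_left ?_ ?_) ((Commute.one_left _).smul_left _) <;>
  exact Commute.sub_right (Commute.add_right ‹_› ‹_›) ((Commute.one_right _).smul_right _)

/-- The rearrangement of the Crank–Nicolson equation that separates `U` from `W`. -/
lemma cayley_algebra {E : Type*} [AddCommGroup E] [Module ℂ E] (z c : ℂ)
    (U W DU DW MU MW g : E) :
    (z • (U - W) = (-c) • ((1 / 2 : ℂ) • (DU + DW)) + (1 / 2 : ℂ) • (MU + MW) + g) ↔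
    (z • U - (1 / 2 : ℂ) • ((-c) • DU + MU) =
      z • W + (1 / 2 : ℂ) • ((-c) • DW + MW) + g) := by
  rw [← sub_eq_zero, ← sub_eq_zero (b := z • W + (1 / 2 : ℂ) • ((-c) • DW + MW) + g)]
  have : z • (U - W) - ((-c) • ((1 / 2 : ℂ) • (DU + DW)) + (1 / 2 : ℂ) • (MU + MW) + g) =
    z • U - (1 / 2 : ℂ) • ((-c) • DU + MU) -
      (z • W + (1 / 2 : ℂ) • ((-c) • DW + MW) + g) := by module
  rw [this]

omit [CompleteSpace H] in
lemma exists_inverse {s : H →L[ℂ] H} (hs : IsUnit s) :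
    ∃ r : H →L[ℂ] H, r * s = 1 ∧ s * r = 1 := by
  obtain ⟨u, rfl⟩ := hs
  exact ⟨↑u⁻¹, by simp, by simp⟩

lemma isUnit_sub_of_selfAdjoint {A : H →L[ℂ] H} (hA : IsSelfAdjoint A) {a : ℝ} (ha : a ≠ 0) :
    IsUnit ((Complex.I * a) • (1 : H →L[ℂ] H) - A) := by
  by_contra hn
  rw [← Algebra.algebraMap_eq_smul_one] at hn
  have := congrArg Complex.im (hA.mem_spectrum_eq_re (spectrum.mem_iff.2 hn))
  simp at this
  exact ha this

lemma inverse_mul_selfAdjoint {s r D : H →L[ℂ] H} (hrs : r * s = 1) (hsr : s * r = 1)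
    (hss : IsSelfAdjoint s) (hD : IsSelfAdjoint D) (hc : Commute s D) :
    IsSelfAdjoint (r * D) := by
  have h1 : star r = r := by
    have h2 : star r * s = 1 := by simpa [hss.star_eq] using congrArg star hsr
    calc star r = star r * (s * r) := by rw [hsr, mul_one]
      _ = r := by rw [← mul_assoc, h2, one_mul]
  have h3 : D * r = r * D := by
    calc D * r = r * s * (D * r) := by rw [hrs, one_mul]
      _ = r * (s * D) * r := by simp only [mul_assoc]
      _ = r * D * (s * r) := by rw [hc.eq]; simp only [mul_assoc]
      _ = r * D := by rw [hsr, mul_one]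
  rw [IsSelfAdjoint, star_mul, hD.star_eq, h1, h3]

/-- If `s` is invertible, self-adjoint and commutes with the self-adjoint `D`, then `s⁻¹ D` is
self-adjoint, so `A = (-c s⁻¹ D + M) / 2` is self-adjoint and `i a - A` is invertible. Applying
`s⁻¹` turns the Crank–Nicolson step into an equation for this operator. -/
lemma cayley_step {s D M : H →L[ℂ] H} (hs : IsUnit s) (hss : IsSelfAdjoint s)
    (hD : IsSelfAdjoint D) (hM : IsSelfAdjoint M) (hc : Commute s D) {a : ℝ} (ha : a ≠ 0) (c : ℝ)
    (W G : H) :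
    ∃! U : H, (Complex.I * a) • s (U - W) =
      (-(c : ℂ)) • D ((1 / 2 : ℂ) • (U + W)) + s (M ((1 / 2 : ℂ) • (U + W))) + G := by
  obtain ⟨r, hrs, hsr⟩ := exists_inverse hs
  have hru : ∀ x, r (s x) = x := fun x => congrArg (fun T : H →L[ℂ] H => T x) hrs
  have hur : ∀ x, s (r x) = x := fun x => congrArg (fun T : H →L[ℂ] H => T x) hsr
  have hrD := inverse_mul_selfAdjoint hrs hsr hss hD hc
  have hAs : IsSelfAdjoint ((1 / 2 : ℂ) • ((-(c : ℂ)) • (r * D) + M)) := by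
    refine IsSelfAdjoint.smul ?_ ((IsSelfAdjoint.smul ?_ hrD).add hM)
    · simp [IsSelfAdjoint]
    · simp [IsSelfAdjoint]
  obtain ⟨w, hwv, hvw⟩ := exists_inverse (isUnit_sub_of_selfAdjoint hAs ha)
  have hwv' : ∀ x, w ((Complex.I * a) • x - (1 / 2 : ℂ) • ((-(c : ℂ)) • r (D x) + M x)) = x :=
    fun x => congrArg (fun T : H →L[ℂ] H => T x) hwv
  have hvw' : ∀ x, (Complex.I * a) • w x - (1 / 2 : ℂ) • ((-(c : ℂ)) • r (D (w x)) + M (w x)) = x :=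
    fun x => congrArg (fun T : H →L[ℂ] H => T x) hvw
  have hinj : Function.Injective r := Function.LeftInverse.injective hur
  have key : ∀ U : H, ((Complex.I * a) • s (U - W) =
      (-(c : ℂ)) • D ((1 / 2 : ℂ) • (U + W)) + s (M ((1 / 2 : ℂ) • (U + W))) + G) ↔
      (Complex.I * a) • U - (1 / 2 : ℂ) • ((-(c : ℂ)) • r (D U) + M U) =
        (Complex.I * a) • W + (1 / 2 : ℂ) • ((-(c : ℂ)) • r (D W) + M W) + r G := by
    intro U
    rw [← hinj.eq_iff]
    simp only [map_add, map_sub, map_smul, hru]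
    rw [← cayley_algebra]
  refine ⟨w ((Complex.I * a) • W + (1 / 2 : ℂ) • ((-(c : ℂ)) • r (D W) + M W) + r G),
    (key _).2 (hvw' _), ?_⟩
  intro U hU
  rw [← (key U).1 hU, hwv']

end abstract

lemma commute_secondDiff : Commute (secondDiff (Sx K)) (secondDiff (Sy K)) :=
  commute_secondDiff_of commute_Sx_Sy commute_Sx_Sy_adj

/-! ### The Numerov operators -/

/-- The Numerov average `s_N` on `ℓ²` over the interior nodes. -/
def opS (K : ℕ) : Hil K →L[ℂ] Hil K :=
  1 + (1 / 12 : ℂ) • secondDiff (Sx K) + (1 / 12 : ℂ) • secondDiff (Sy K)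

/-- The Numerov Laplacian `Δ_{hN}` on `ℓ²` over the interior nodes. -/
def opD (K : ℕ) (hx hy : ℝ) : Hil K →L[ℂ] Hil K :=
  (1 / hx ^ 2 : ℂ) • (secondDiff (Sx K) + (1 / 12 : ℂ) • (secondDiff (Sy K) * secondDiff (Sx K))) +
  (1 / hy ^ 2 : ℂ) • (secondDiff (Sy K) + (1 / 12 : ℂ) • (secondDiff (Sx K) * secondDiff (Sy K)))

/-- Multiplication by the potential `Ṽ_j`. -/
def opM (K : ℕ) (Vt : ℕ → ℝ) (C : ℝ) (hC : ∀ j, |Vt j| ≤ C) : Hil K →L[ℂ] Hil K :=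
  weighted (fun p => (Vt p.1.1 : ℂ)) C (fun p => by simpa using hC p.1.1) id Function.injective_id

lemma isSelfAdjoint_real (r : ℂ) (h : (starRingEnd ℂ) r = r) : IsSelfAdjoint r := h

lemma opS_selfAdjoint : IsSelfAdjoint (opS K) := by
  refine ((IsSelfAdjoint.one _).add (IsSelfAdjoint.smul ?_ (secondDiff_selfAdjoint _))).add
    (IsSelfAdjoint.smul ?_ (secondDiff_selfAdjoint _)) <;>
  exact isSelfAdjoint_real _ (by simp [map_ofNat])

lemma opD_selfAdjoint (hx hy : ℝ) : IsSelfAdjoint (opD K hx hy) := by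
  have h1 : IsSelfAdjoint (secondDiff (Sx K) * secondDiff (Sy K)) :=
    ((secondDiff_selfAdjoint _).commute_iff (secondDiff_selfAdjoint _)).1 commute_secondDiff
  have h2 : IsSelfAdjoint (secondDiff (Sy K) * secondDiff (Sx K)) :=
    ((secondDiff_selfAdjoint _).commute_iff (secondDiff_selfAdjoint _)).1 commute_secondDiff.symm
  refine (IsSelfAdjoint.smul ?_ ((secondDiff_selfAdjoint _).add (IsSelfAdjoint.smul ?_ h2))).add
    (IsSelfAdjoint.smul ?_ ((secondDiff_selfAdjoint _).add (IsSelfAdjoint.smul ?_ h1))) <;>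
  exact isSelfAdjoint_real _ (by simp [map_ofNat])

lemma opM_selfAdjoint (Vt : ℕ → ℝ) (C : ℝ) (hC : ∀ j, |Vt j| ≤ C) :
    IsSelfAdjoint (opM K Vt C hC) := by
  rw [ContinuousLinearMap.isSelfAdjoint_iff_isSymmetric]
  intro f g
  simp only [ContinuousLinearMap.coe_coe]
  rw [lp.inner_eq_tsum, lp.inner_eq_tsum]
  congr 1
  ext p
  simp only [opM, weighted_apply, id, ext_node, RCLike.inner_apply, map_mul, Complex.conj_ofReal]
  ring

lemma opS_commute_opD (hx hy : ℝ) : Commute (opS K) (opD K hx hy) := by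
  have key : ∀ T : Hil K →L[ℂ] Hil K, Commute (secondDiff (Sx K)) T →
      Commute (secondDiff (Sy K)) T → Commute (opS K) T := fun T h1 h2 =>
    ((Commute.one_left _).add_left (h1.smul_left _)).add_left (h2.smul_left _)
  have hX : Commute (opS K) (secondDiff (Sx K)) :=
    key _ (Commute.refl _) commute_secondDiff.symm
  have hY : Commute (opS K) (secondDiff (Sy K)) := key _ commute_secondDiff (Commute.refl _)
  exact ((hX.add_right ((hY.mul_right hX).smul_right _)).smul_right _).add_right
    ((hY.add_right ((hX.mul_right hY).smul_right _)).smul_right _)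

/-- `s_N` differs from the identity by an operator of norm at most `4/12 + 4/12 < 1`, so its
inverse is given by a Neumann series. -/
lemma opS_isUnit : IsUnit (opS K) := by
  have h : ‖(-(1 / 12 : ℂ)) • (secondDiff (Sx K) + secondDiff (Sy K))‖ < 1 := by
    rw [norm_smul]
    have := norm_add_le (secondDiff (Sx K)) (secondDiff (Sy K))
    have h1 := secondDiff_norm (Sx_norm (K := K))
    have h2 := secondDiff_norm (Sy_norm (K := K))
    norm_num
    linarith
  have := isUnit_one_sub_of_norm_lt_one h
  convert this using 1
  unfold opS
  module

/-! ### Mesh functions as vectors -/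

/-- The mesh function `W` agrees on `k ≤ K` with the zero extension of the vector `f`. -/
def Rep (K : ℕ) (W : ℕ → ℕ → ℂ) (f : Hil K) : Prop := ∀ j k, k ≤ K → W j k = ext f (j, k)

lemma Rep.add {W W' : ℕ → ℕ → ℂ} {f f' : Hil K} (h : Rep K W f) (h' : Rep K W' f') :
    Rep K (fun j k => W j k + W' j k) (f + f') := by
  intro j k hk
  beta_reduce
  rw [lp.coeFn_add, ext_add, h j k hk, h' j k hk]

lemma Rep.sub {W W' : ℕ → ℕ → ℂ} {f f' : Hil K} (h : Rep K W f) (h' : Rep K W' f') :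
    Rep K (fun j k => W j k - W' j k) (f - f') := by
  intro j k hk
  beta_reduce
  rw [lp.coeFn_sub, ext_sub, h j k hk, h' j k hk]

lemma Rep.smul {W : ℕ → ℕ → ℂ} {f : Hil K} (c : ℂ) (h : Rep K W f) :
    Rep K (fun j k => c * W j k) (c • f) := by
  intro j k hk
  beta_reduce
  rw [lp.coeFn_smul, ext_smul, h j k hk]

lemma Rep.congr {W W' : ℕ → ℕ → ℂ} {f : Hil K} (h : Rep K W f) (e : ∀ j k, W' j k = W j k) :
    Rep K W' f := fun j k hk => (e j k).trans (h j k hk)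

lemma secondDiff_Sx_apply (f : Hil K) (p : Node K) : secondDiff (Sx K) f p =
    ext f (p.1.1 + 1, p.1.2) + ext f (p.1.1 - 1, p.1.2) - 2 * ext f p.1 := by
  rw [← Sx_apply, ← Sx_adj_apply, ext_node]
  rfl

lemma secondDiff_Sy_apply (f : Hil K) (p : Node K) : secondDiff (Sy K) f p =
    ext f (p.1.1, p.1.2 + 1) + ext f (p.1.1, p.1.2 - 1) - 2 * ext f p.1 := by
  rw [← Sy_apply, ← Sy_adj_apply, ext_node]
  rfl

lemma Rep.ddx {W : ℕ → ℕ → ℂ} {f : Hil K} (hx : ℝ) (h : Rep K W f) :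
    Rep K (ddx K hx W) ((1 / hx ^ 2 : ℂ) • secondDiff (Sx K) f) := by
  intro j k hk
  unfold _root_.ddx
  rw [lp.coeFn_smul, ext_smul]
  split_ifs with hb
  · rw [ext_of_not, mul_zero]
    simp only; omega
  · have hp : 0 < j ∧ 0 < k ∧ k < K := by omega
    have := ext_node (secondDiff (Sx K) f) ⟨(j, k), hp⟩
    simp only at this
    rw [this, secondDiff_Sx_apply, h _ _ hk, h _ _ hk, h _ _ hk]
    ring

lemma Rep.ddy {W : ℕ → ℕ → ℂ} {f : Hil K} (hy : ℝ) (h : Rep K W f) :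
    Rep K (ddy K hy W) ((1 / hy ^ 2 : ℂ) • secondDiff (Sy K) f) := by
  intro j k hk
  unfold _root_.ddy
  rw [lp.coeFn_smul, ext_smul]
  split_ifs with hb
  · rw [ext_of_not, mul_zero]
    simp only; omega
  · have hp : 0 < j ∧ 0 < k ∧ k < K := by omega
    have := ext_node (secondDiff (Sy K) f) ⟨(j, k), hp⟩
    simp only at this
    rw [this, secondDiff_Sy_apply, h _ _ hk, h j (k + 1) (by omega), h j (k - 1) (by omega)]
    ring

lemma numerov_coeff {h : ℝ} (hh : 0 < h) : ((h ^ 2 / 12 : ℝ) : ℂ) * (1 / h ^ 2 : ℂ) = 1 / 12 := by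
  have : (h : ℂ) ≠ 0 := by exact_mod_cast hh.ne'
  push_cast
  field_simp

lemma Rep.sN {W : ℕ → ℕ → ℂ} {f : Hil K} {hx hy : ℝ} (hhx : 0 < hx) (hhy : 0 < hy)
    (h : Rep K W f) : Rep K (sN K hx hy W) (opS K f) := by
  have := (h.add ((h.ddx hx).smul ((hx ^ 2 / 12 : ℝ) : ℂ))).add
    ((h.ddy hy).smul ((hy ^ 2 / 12 : ℝ) : ℂ))
  rw [smul_smul, smul_smul, numerov_coeff hhx, numerov_coeff hhy] at this
  exact this

lemma Rep.deltaHN {W : ℕ → ℕ → ℂ} {f : Hil K} {hx hy : ℝ} (hhx : 0 < hx) (hhy : 0 < hy)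
    (h : Rep K W f) : Rep K (deltaHN K hx hy W) (opD K hx hy f) := by
  have h1 := (h.ddx hx).add (((h.ddx hx).ddy hy).smul ((hy ^ 2 / 12 : ℝ) : ℂ))
  have h2 := (h.ddy hy).add (((h.ddy hy).ddx hx).smul ((hx ^ 2 / 12 : ℝ) : ℂ))
  rw [smul_smul, numerov_coeff hhy, map_smul] at h1
  rw [smul_smul, numerov_coeff hhx, map_smul] at h2
  have h3 := h1.add h2
  have e : opD K hx hy f = (1 / hx ^ 2 : ℂ) • (secondDiff (Sx K) f +
      (1 / 12 : ℂ) • (secondDiff (Sy K) (secondDiff (Sx K) f))) +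
    (1 / hy ^ 2 : ℂ) • (secondDiff (Sy K) f +
      (1 / 12 : ℂ) • (secondDiff (Sx K) (secondDiff (Sy K) f))) := rfl
  rw [e, smul_add, smul_add, smul_comm _ (1 / 12 : ℂ), smul_comm _ (1 / 12 : ℂ)]
  exact h3

lemma Rep.mulV {W : ℕ → ℕ → ℂ} {f : Hil K} (Vt : ℕ → ℝ) (C : ℝ) (hC : ∀ j, |Vt j| ≤ C)
    (h : Rep K W f) : Rep K (fun j k => (Vt j : ℂ) * W j k) (opM K Vt C hC f) := by
  intro j k hk
  beta_reduce
  by_cases hp : 0 < j ∧ 0 < k ∧ k < K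
  · have := ext_node (opM K Vt C hC f) ⟨(j, k), hp⟩
    simp only at this
    rw [this, h j k hk]
    rfl
  · rw [h j k hk, ext_of_not _ hp, ext_of_not _ hp, mul_zero]

/-- An identity between mesh functions at all interior nodes is an identity in `ℓ²`. -/
lemma Rep.eq_iff (hK : 2 ≤ K) {W W' : ℕ → ℕ → ℂ} {f f' : Hil K} (h : Rep K W f)
    (h' : Rep K W' f') :
    (∀ j k, 1 ≤ j → 1 ≤ k → k ≤ K - 1 → W j k = W' j k) ↔ f = f' := by
  constructor
  · intro e
    ext p
    obtain ⟨⟨j, k⟩, hp⟩ := p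
    rw [← ext_node f, ← ext_node f']
    simp only at hp ⊢
    rw [← h _ _ (by omega), ← h' _ _ (by omega)]
    exact e _ _ (by omega) (by omega) (by omega)
  · rintro rfl j k h1 h2 h3
    rw [h _ _ (by omega), h' _ _ (by omega)]

/-- Square summability over the strip, summing first over `k` and then over `j`. -/
lemma summable_ext_iff (f : Node K → ℂ) : Summable (fun q => ‖ext f q‖ ^ 2) ↔
    Summable fun j : ℕ => ∑ k ∈ Finset.Icc 1 (K - 1), ‖ext f (j, k)‖ ^ 2 := by
  have h0 : ∀ j, ∀ k ∉ Finset.Icc 1 (K - 1), ‖ext f (j, k)‖ ^ 2 = 0 := by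
    intro j k hk
    rw [Finset.mem_Icc] at hk
    rw [ext_of_not]
    · simp
    · simp only; omega
  rw [summable_prod_of_nonneg (fun _ => by positivity)]
  have : ∀ j, ∑' k, ‖ext f (j, k)‖ ^ 2 = ∑ k ∈ Finset.Icc 1 (K - 1), ‖ext f (j, k)‖ ^ 2 :=
    fun j => tsum_eq_sum (h0 j)
  simp only [this]
  exact ⟨fun h => h.2, fun h => ⟨fun j => summable_of_ne_finset_zero (h0 j), h⟩⟩

lemma exists_rep {W : ℕ → ℕ → ℂ} (hW : memH K W) : ∃ f : Hil K, Rep K W f := by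
  obtain ⟨h1, h2, h3, h4⟩ := hW
  set f : Node K → ℂ := fun p => W p.1.1 p.1.2 with hf
  have e : ∀ j k, k ≤ K → W j k = ext f (j, k) := by
    intro j k hk
    unfold ext
    split_ifs with hp
    · rfl
    · simp only at hp
      have : j = 0 ∨ k = 0 ∨ k = K := by omega
      rcases this with rfl | rfl | rfl
      exacts [h1 _, h2 _, h3 _]
  refine ⟨⟨f, (memℓp_iff f).2 ((summable_node f).2 ((summable_ext_iff f).2 ?_))⟩, e⟩
  refine h4.congr fun j => Finset.sum_congr rfl fun k hk => ?_
  rw [Finset.mem_Icc] at hk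
  rw [e j k (by omega)]

lemma memH_ext (f : Hil K) : memH K (fun j k => ext f (j, k)) := by
  refine ⟨fun k => ext_of_not _ (by simp), fun j => ext_of_not _ (by simp),
    fun j => ext_of_not _ (by simp), (summable_ext_iff _).1 (summable_ext f)⟩

/-! ### The steps of the scheme -/

/-- The middle (Crank–Nicolson) equation of the scheme, with time step `t`. -/
def MidEqn (K : ℕ) (hx hy hbar ch t : ℝ) (Vt : ℕ → ℝ) (B F T : ℕ → ℕ → ℂ) : Prop :=
  ∀ j k, 1 ≤ j → 1 ≤ k → k ≤ K - 1 →
    Complex.I * (hbar : ℂ)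
        * sN K hx hy (fun j' k' => T j' k' - B j' k') j k / ((t : ℝ) : ℂ)
      = -(ch : ℂ) * deltaHN K hx hy (fun j' k' => (T j' k' + B j' k') / 2) j k
        + sN K hx hy (fun j' k' => (Vt j' : ℂ) * ((T j' k' + B j' k') / 2)) j k
        + F j k

lemma midEqn_iff (hK : 2 ≤ K) {hx hy hbar ch t : ℝ} (hhx : 0 < hx) (hhy : 0 < hy)
    (Vt : ℕ → ℝ) (C : ℝ) (hC : ∀ j, |Vt j| ≤ C) {B F T : ℕ → ℕ → ℂ} {b g u : Hil K}
    (hb : Rep K B b) (hg : Rep K F g) (hu : Rep K T u) :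
    MidEqn K hx hy hbar ch t Vt B F T ↔
      (Complex.I * ((hbar / t : ℝ) : ℂ)) • opS K (u - b) =
        (-(ch : ℂ)) • opD K hx hy ((1 / 2 : ℂ) • (u + b)) +
        opS K (opM K Vt C hC ((1 / 2 : ℂ) • (u + b))) + g := by
  have hm : Rep K (fun j k => (T j k + B j k) / 2) ((1 / 2 : ℂ) • (u + b)) :=
    ((hu.add hb).smul (1 / 2 : ℂ)).congr fun j k => by ring
  have hl := ((hu.sub hb).sN hhx hhy).smul (Complex.I * ((hbar / t : ℝ) : ℂ))
  have hr := (((hm.deltaHN hhx hhy).smul (-(ch : ℂ))).add ((hm.mulV Vt C hC).sN hhx hhy)).add hg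
  refine (Iff.trans ?_ (Rep.eq_iff hK (hl.congr (W' := fun j k => Complex.I * (hbar : ℂ)
      * _root_.sN K hx hy (fun j' k' => T j' k' - B j' k') j k / ((t : ℝ) : ℂ)) ?_) hr))
  · rfl
  · intro j k
    push_cast
    ring

lemma middle_existsUnique {hx hy hbar ch t : ℝ} (hhbar : 0 < hbar) (ht : 0 < t)
    (Vt : ℕ → ℝ) (C : ℝ) (hC : ∀ j, |Vt j| ≤ C) (b g : Hil K) :
    ∃! u : Hil K, (Complex.I * ((hbar / t : ℝ) : ℂ)) • opS K (u - b) =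
        (-(ch : ℂ)) • opD K hx hy ((1 / 2 : ℂ) • (u + b)) +
        opS K (opM K Vt C hC ((1 / 2 : ℂ) • (u + b))) + g :=
  cayley_step opS_isUnit opS_selfAdjoint (opD_selfAdjoint hx hy) (opM_selfAdjoint Vt C hC)
    (opS_commute_opD hx hy) (div_pos hhbar ht).ne' ch b g

lemma middle_exists (hK : 2 ≤ K) {hx hy hbar ch t : ℝ}
    (hhx : 0 < hx) (hhy : 0 < hy) (hhbar : 0 < hbar) (ht : 0 < t)
    (Vt : ℕ → ℝ) (hVt : ∃ C : ℝ, ∀ j, |Vt j| ≤ C)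
    {B F : ℕ → ℕ → ℂ} (hB : memH K B) (hF : memH K F) :
    ∃ T, memH K T ∧ MidEqn K hx hy hbar ch t Vt B F T := by
  obtain ⟨C, hC⟩ := hVt
  obtain ⟨b, hb⟩ := exists_rep hB
  obtain ⟨g, hg⟩ := exists_rep hF
  obtain ⟨u, hu, -⟩ := middle_existsUnique (hx := hx) (hy := hy) (ch := ch) hhbar ht Vt C hC b g
  exact ⟨fun j k => ext u (j, k), memH_ext u,
    (midEqn_iff hK hhx hhy Vt C hC hb hg fun _ _ _ => rfl).2 hu⟩

/-- Uniqueness for the middle step. The data `B` and `B'` need only agree for `k ≤ K`, since mesh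
functions are unconstrained beyond `K`. -/
lemma middle_unique (hK : 2 ≤ K) {hx hy hbar ch t : ℝ}
    (hhx : 0 < hx) (hhy : 0 < hy) (hhbar : 0 < hbar) (ht : 0 < t)
    (Vt : ℕ → ℝ) (hVt : ∃ C : ℝ, ∀ j, |Vt j| ≤ C)
    {B B' F T T' : ℕ → ℕ → ℂ} (hB : memH K B) (hBB : ∀ j k, k ≤ K → B j k = B' j k)
    (hF : memH K F) (hT : memH K T) (hT' : memH K T')
    (h : MidEqn K hx hy hbar ch t Vt B F T) (h' : MidEqn K hx hy hbar ch t Vt B' F T') :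
    ∀ j k, k ≤ K → T j k = T' j k := by
  intro j k hk
  obtain ⟨C, hC⟩ := hVt
  obtain ⟨b, hb⟩ := exists_rep hB
  obtain ⟨g, hg⟩ := exists_rep hF
  obtain ⟨v, hv⟩ := exists_rep hT
  obtain ⟨v', hv'⟩ := exists_rep hT'
  have hb' : Rep K B' b := fun j k hk => (hBB j k hk).symm.trans (hb j k hk)
  rw [hv j k hk, hv' j k hk, (middle_existsUnique hhbar ht Vt C hC b g).unique
    ((midEqn_iff hK hhx hhy Vt C hC hb hg hv).1 h) ((midEqn_iff hK hhx hhy Vt C hC hb' hg hv').1 h')]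

/-- The Cayley factor `(iħ/s + d/2) / (iħ/s - d/2)`: the multiplier by which a pointwise step of
length `s` with potential `d` acts. It is unimodular since `d` is real. -/
def cay (hbar s d : ℝ) : ℂ :=
  (Complex.I * (hbar / s : ℝ) + (d / 2 : ℝ)) / (Complex.I * (hbar / s : ℝ) - (d / 2 : ℝ))

lemma cay_den {hbar s : ℝ} (hh : 0 < hbar) (hs : 0 < s) (d : ℝ) :
    Complex.I * (hbar / s : ℝ) - (d / 2 : ℝ) ≠ 0 := by
  intro h
  have := congrArg Complex.im h
  simp only [Complex.sub_im, Complex.mul_im, Complex.I_re, Complex.I_im, Complex.ofReal_re,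
    Complex.ofReal_im, Complex.zero_im] at this
  have h2 := div_pos hh hs
  linarith

lemma cay_norm {hbar s : ℝ} (hh : 0 < hbar) (hs : 0 < s) (d : ℝ) : ‖cay hbar s d‖ = 1 := by
  have h : Complex.I * (hbar / s : ℝ) + (d / 2 : ℝ) =
      -(starRingEnd ℂ) (Complex.I * (hbar / s : ℝ) - (d / 2 : ℝ)) := by
    simp only [map_sub, map_mul, Complex.conj_I, Complex.conj_ofReal]; ring
  rw [cay, norm_div, h, norm_neg, Complex.norm_conj, div_self]
  exact norm_ne_zero_iff.2 (cay_den hh hs d)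

lemma half_step {hbar s : ℝ} (hh : 0 < hbar) (hs : 0 < s) (d : ℝ) (b p : ℂ) :
    Complex.I * (hbar : ℂ) * (b - p) / (s : ℂ) = (d : ℂ) * ((b + p) / 2) ↔
      b = cay hbar s d * p := by
  have hd := cay_den hh hs d
  rw [cay, div_mul_eq_mul_div, eq_div_iff hd, ← sub_eq_zero, ← sub_eq_zero (a := b * _)]
  have : Complex.I * (hbar : ℂ) * (b - p) / (s : ℂ) - (d : ℂ) * ((b + p) / 2) =
      b * (Complex.I * (hbar / s : ℝ) - (d / 2 : ℝ)) -
        (Complex.I * (hbar / s : ℝ) + (d / 2 : ℝ)) * p := by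
    push_cast; ring
  rw [this]

lemma memH_mul {W : ℕ → ℕ → ℂ} (hW : memH K W) (c : ℕ → ℕ → ℂ) (hc : ∀ j k, ‖c j k‖ = 1) :
    memH K (fun j k => c j k * W j k) := by
  obtain ⟨h1, h2, h3, h4⟩ := hW
  refine ⟨fun k => by simp [h1], fun j => by simp [h2], fun j => by simp [h3], ?_⟩
  simpa [hc] using h4

/-- A pointwise half-step determines its output for all `k ≤ K`; on the boundary `memH` forces
both outputs to vanish. -/
lemma half_unique {hbar s : ℝ} (hh : 0 < hbar) (hs : 0 < s) (d : ℕ → ℕ → ℝ)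
    {B B' P P' : ℕ → ℕ → ℂ} (hB : memH K B) (hB' : memH K B')
    (hP : ∀ j k, k ≤ K → P j k = P' j k)
    (h : ∀ j k, 1 ≤ j → 1 ≤ k → k ≤ K - 1 →
      Complex.I * (hbar : ℂ) * (B j k - P j k) / (s : ℂ) = (d j k : ℂ) * ((B j k + P j k) / 2))
    (h' : ∀ j k, 1 ≤ j → 1 ≤ k → k ≤ K - 1 →
      Complex.I * (hbar : ℂ) * (B' j k - P' j k) / (s : ℂ) =
        (d j k : ℂ) * ((B' j k + P' j k) / 2)) :
    ∀ j k, k ≤ K → B j k = B' j k := by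
  intro j k hk
  by_cases hi : 1 ≤ j ∧ 1 ≤ k ∧ k ≤ K - 1
  · obtain ⟨i1, i2, i3⟩ := hi
    rw [(half_step hh hs _ _ _).1 (h j k i1 i2 i3), (half_step hh hs _ _ _).1 (h' j k i1 i2 i3),
      hP j k hk]
  · have : j = 0 ∨ k = 0 ∨ k = K := by omega
    rcases this with rfl | rfl | rfl
    · rw [hB.1, hB'.1]
    · rw [hB.2.1, hB'.2.1]
    · rw [hB.2.2.1, hB'.2.2.1]

end StripScheme

/-- for bounded real potentials `V`, `Ṽ`, positive time steps, initial data
`Ψ⁰_h ∈ H_h` and sources `F^m ∈ H_h`, the splitting scheme has exactly one solution: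
existence of families satisfying (i)-(iii) with `Ψ⁰ = Ψ⁰_h`, and any two such families
coincide (as mesh functions, i.e. at all nodes with `k ≤ K`). -/
theorem stmt4 (K : ℕ) (hK : 2 ≤ K) (hx hy hbar ch : ℝ)
    (hhx : 0 < hx) (hhy : 0 < hy) (hhbar : 0 < hbar) (hch : 0 < ch)
    (V : ℕ → ℕ → ℝ) (hV : ∃ C : ℝ, ∀ j k, |V j k| ≤ C)
    (Vt : ℕ → ℝ) (hVt : ∃ C : ℝ, ∀ j, |Vt j| ≤ C)
    (tau : ℕ → ℝ) (htau : ∀ m, 1 ≤ m → 0 < tau m)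
    (Psi0 : ℕ → ℕ → ℂ) (hPsi0 : memH K Psi0)
    (F : ℕ → ℕ → ℕ → ℂ) (hF : ∀ m, 1 ≤ m → memH K (F m)) :
    (∃ PsiB PsiT Psi : ℕ → ℕ → ℕ → ℂ,
      SplitSol K hx hy hbar ch V Vt tau F PsiB PsiT Psi ∧ Psi 0 = Psi0) ∧
    (∀ PsiB PsiT Psi PsiB' PsiT' Psi' : ℕ → ℕ → ℕ → ℂ,
      SplitSol K hx hy hbar ch V Vt tau F PsiB PsiT Psi →
      SplitSol K hx hy hbar ch V Vt tau F PsiB' PsiT' Psi' →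
      (∀ j k, k ≤ K → Psi 0 j k = Psi0 j k) →
      (∀ j k, k ≤ K → Psi' 0 j k = Psi0 j k) →
      (∀ m j k, k ≤ K → Psi m j k = Psi' m j k) ∧
      (∀ m, 1 ≤ m → ∀ j k, k ≤ K →
        PsiB m j k = PsiB' m j k ∧ PsiT m j k = PsiT' m j k)) := by
  have hstep : ∀ (m : ℕ) (P : {P : ℕ → ℕ → ℂ // memH K P}),
      ∃ Q : (ℕ → ℕ → ℂ) × (ℕ → ℕ → ℂ) × {P : ℕ → ℕ → ℂ // memH K P},
      1 ≤ m → memH K Q.1 ∧ memH K Q.2.1 ∧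
      (∀ j k, 1 ≤ j → 1 ≤ k → k ≤ K - 1 →
        Complex.I * (hbar : ℂ) * (Q.1 j k - P.1 j k) / ((tau m / 2 : ℝ) : ℂ)
          = ((V j k - Vt j : ℝ) : ℂ) * ((Q.1 j k + P.1 j k) / 2)) ∧
      (∀ j k, 1 ≤ j → 1 ≤ k → k ≤ K - 1 →
        Complex.I * (hbar : ℂ)
            * sN K hx hy (fun j' k' => Q.2.1 j' k' - Q.1 j' k') j k / ((tau m : ℝ) : ℂ)
          = -(ch : ℂ) * deltaHN K hx hy (fun j' k' => (Q.2.1 j' k' + Q.1 j' k') / 2) j k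
            + sN K hx hy (fun j' k' => (Vt j' : ℂ) * ((Q.2.1 j' k' + Q.1 j' k') / 2)) j k
            + F m j k) ∧
      (∀ j k, 1 ≤ j → 1 ≤ k → k ≤ K - 1 →
        Complex.I * (hbar : ℂ) * (Q.2.2.1 j k - Q.2.1 j k) / ((tau m / 2 : ℝ) : ℂ)
          = ((V j k - Vt j : ℝ) : ℂ) * ((Q.2.2.1 j k + Q.2.1 j k) / 2)) := by
    intro m P
    by_cases hm : 1 ≤ m
    · have ht := htau m hm
      have ht2 : 0 < tau m / 2 := half_pos ht
      set c : ℕ → ℕ → ℂ := fun j k => StripScheme.cay hbar (tau m / 2) (V j k - Vt j) with hc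
      have hcn : ∀ j k, ‖c j k‖ = 1 := fun j k => StripScheme.cay_norm hhbar ht2 _
      have hB := StripScheme.memH_mul P.2 c hcn
      obtain ⟨T, hT, hE⟩ := StripScheme.middle_exists (ch := ch) hK hhx hhy hhbar ht Vt hVt hB
        (hF m hm)
      exact ⟨⟨_, T, ⟨_, StripScheme.memH_mul hT c hcn⟩⟩, fun _ => ⟨hB, hT,
        fun j k _ _ _ => (StripScheme.half_step hhbar ht2 _ _ _).2 rfl, hE,
        fun j k _ _ _ => (StripScheme.half_step hhbar ht2 _ _ _).2 rfl⟩⟩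
    -- Level `0` is not the target of any step, so any value will do there.
    · exact ⟨⟨0, 0, P⟩, fun h => absurd h hm⟩
  refine ⟨?_, ?_⟩
  · choose Q hQ using hstep
    let Psi : ℕ → {P : ℕ → ℕ → ℂ // memH K P} := fun n =>
      Nat.rec ⟨Psi0, hPsi0⟩ (fun m P => (Q (m + 1) P).2.2) n
    have hrec : ∀ m, 1 ≤ m → (Q m (Psi (m - 1))).2.2 = Psi m := by
      intro m hm
      obtain ⟨n, rfl⟩ := Nat.exists_eq_add_of_le' hm
      rfl
    refine ⟨fun m => (Q m (Psi (m - 1))).1, fun m => (Q m (Psi (m - 1))).2.1, fun m => (Psi m).1,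
      ⟨?_, ?_, fun m => (Psi m).2, ?_, ?_, ?_⟩, rfl⟩
    · exact fun m hm => (hQ m _ hm).1
    · exact fun m hm => (hQ m _ hm).2.1
    · exact fun m hm => (hQ m _ hm).2.2.1
    · exact fun m hm => (hQ m _ hm).2.2.2.1
    · intro m hm
      have := (hQ m (Psi (m - 1)) hm).2.2.2.2
      rw [hrec m hm] at this
      exact this
  · rintro B T P B' T' P' ⟨hB, hT, hP, e1, e2, e3⟩ ⟨hB', hT', hP', e1', e2', e3'⟩ h0 h0'
    have main : ∀ m, 1 ≤ m → (∀ j k, k ≤ K → P (m - 1) j k = P' (m - 1) j k) →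
        (∀ j k, k ≤ K → B m j k = B' m j k) ∧ (∀ j k, k ≤ K → T m j k = T' m j k) ∧
        (∀ j k, k ≤ K → P m j k = P' m j k) := by
      intro m hm hprev
      have ht := htau m hm
      have ht2 : 0 < tau m / 2 := half_pos ht
      have hBB := StripScheme.half_unique hhbar ht2 (fun j k => V j k - Vt j) (hB m hm) (hB' m hm)
        hprev (e1 m hm) (e1' m hm)
      have hTT := StripScheme.middle_unique hK hhx hhy hhbar ht Vt hVt (hB m hm) hBB (hF m hm)
        (hT m hm) (hT' m hm) (e2 m hm) (e2' m hm)
      exact ⟨hBB, hTT, StripScheme.half_unique hhbar ht2 (fun j k => V j k - Vt j) (hP m) (hP' m)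
        hTT (e3 m hm) (e3' m hm)⟩
    have all : ∀ m j k, k ≤ K → P m j k = P' m j k := by
      intro m
      induction m with
      | zero => exact fun j k hk => (h0 j k hk).trans (h0' j k hk).symm
      | succ n ih => exact (main (n + 1) (by omega) ih).2.2
    refine ⟨all, fun m hm j k hk => ?_⟩
    obtain ⟨h1, h2, -⟩ := main m hm (all (m - 1))
    exact ⟨h1 j k hk, h2 j k hk⟩
end
end

section
/- Any solution of the splitting scheme with all members in H_h satisfies the uniform-in-time L^2-stability bound: for every M >= 1, max over 0 <= m <= M of ||Psi^m||_{H_h} is at most ||Psi^0_h||_{H_h} + (6/hbar) * sum_{m=1}^{M} ||F^m||_{H_h} * tau_m. -/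
/-!
The two half-steps with the real potential `ΔV` act at each node as multiplication by a number of
modulus one (`norm_eq_of_cayley`), so they preserve the norm, and only the Numerov step
(`numerov_step`) can increase it.

On `H_h`, identified with the sequences in `ℓ²(ℕ × ℕ)` supported on the interior (`MeshRep`), the
second differences in `x` and `y` are built from partial shifts. A partial shift is a contraction
whose adjoint is the inverse shift (`norm_pullOp_le`, `pullOp_adj`), and shifts in different
directions commute (`shift_comm`). Hence `s_N` and `Δ_{hN}` are symmetric and commute, and
`‖1 - s_N‖ ≤ 1/3 + 4/12 = 2/3`, so that `s_N` is invertible with `‖s_N⁻¹‖ ≤ 3`.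

Write `u` for the average of the values before and after the Numerov step, and pair the equation
with `s_N⁻¹ u`. The terms `(s_N⁻¹ u, Δ_{hN} u)` and `(u, Ṽ u)` are real, so the imaginary part gives
`ℏ (‖Ψ̃‖² - ‖Ψ̆‖²) / (2τ) ≤ 3 ‖u‖ ‖F‖` (`stab_step`), hence `‖Ψ̃‖ ≤ ‖Ψ̆‖ + 3 τ ‖F‖ / ℏ`. Summing over
the steps proves the bound with the constant `3`, which is better than the required `6`.
-/

noncomputable section

/-! ### The energy estimate in an abstract Hilbert space -/

/-- One step of `(iℏ/τ) S (t - b) = -c D u + S v + f`, where `u = (t + b)/2`, `S` and `D` are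
commuting symmetric operators, `S` is onto with `‖S⁻¹‖ ≤ 3`, and `(u, v)` is real. Pairing with
`S⁻¹ u` and taking imaginary parts leaves `ℏ (‖t‖² - ‖b‖²)/(2τ) = Im (S⁻¹ u, f)`. -/
theorem stab_step {E : Type*} [NormedAddCommGroup E] [InnerProductSpace ℂ E]
    (S D : E →L[ℂ] E) (hS : ∀ u v, inner ℂ (S u) v = inner ℂ u (S v))
    (hD : ∀ u v, inner ℂ (D u) v = inner ℂ u (D v)) (hSD : ∀ u, S (D u) = D (S u))
    (hsurj : ∀ u, ∃ z, S z = u) (hbd : ∀ z, ‖z‖ ≤ 3 * ‖S z‖)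
    (t b v f : E) (hbar tau ch : ℝ) (hh : 0 < hbar) (ht : 0 < tau)
    (hv : (inner ℂ ((1 / 2 : ℂ) • (t + b)) v).im = 0)
    (heq : (Complex.I * hbar / tau) • S (t - b)
      = (-(ch : ℂ)) • D ((1 / 2 : ℂ) • (t + b)) + S v + f) :
    ‖t‖ ≤ ‖b‖ + 3 / hbar * (‖f‖ * tau) := by
  obtain ⟨z, hz⟩ := hsurj ((1 / 2 : ℂ) • (t + b))
  have h1 := congrArg (fun w => (inner ℂ z w).im) heq
  -- `D S` is symmetric because `S` and `D` commute.
  have h2 : (inner ℂ z (D (S z))).im = 0 := by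
    have : (starRingEnd ℂ) (inner ℂ z (D (S z))) = inner ℂ z (D (S z)) := by
      rw [inner_conj_symm, ← hSD, hS, hD, hSD]
    exact Complex.conj_eq_iff_im.mp this
  have h3 : (inner ℂ (t + b) (t - b)).re = ‖t‖ ^ 2 - ‖b‖ ^ 2 := by
    rw [inner_sub_right, inner_add_left, inner_add_left, inner_self_eq_norm_sq_to_K,
      inner_self_eq_norm_sq_to_K]
    have e : (inner ℂ t b).re = (inner ℂ b t).re := by
      rw [← inner_conj_symm t b, Complex.conj_re]
    simp [← Complex.ofReal_pow, e]
    ring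
  have h4 : (inner ℂ z (S (t - b))).re = (‖t‖ ^ 2 - ‖b‖ ^ 2) / 2 := by
    rw [← hS, hz, inner_smul_left, ← h3]
    rw [show (starRingEnd ℂ) (1 / 2 : ℂ) = ((1 / 2 : ℝ) : ℂ) by
      rw [show (1 / 2 : ℂ) = ((1 / 2 : ℝ) : ℂ) by norm_num]; exact Complex.conj_ofReal _, Complex.re_ofReal_mul]
    ring
  have h5 : (inner ℂ z (S v)).im = 0 := by rw [← hS, hz, hv]
  have h6 : hbar / tau * ((‖t‖ ^ 2 - ‖b‖ ^ 2) / 2) = (inner ℂ z f).im := by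
    simp only [inner_add_right, inner_smul_right] at h1
    rw [← hz, Complex.add_im, Complex.add_im, h5,
      show Complex.I * hbar / tau * inner ℂ z (S (t - b))
        = ((hbar / tau : ℝ) : ℂ) * (inner ℂ z (S (t - b)) * Complex.I) by push_cast; ring,
      show (-(ch : ℂ)) = ((-ch : ℝ) : ℂ) by push_cast; rfl, Complex.im_ofReal_mul,
      Complex.im_ofReal_mul, Complex.mul_I_im, h2, h4] at h1
    linarith
  have h7 : (inner ℂ z f).im ≤ 3 * ((‖t‖ + ‖b‖) / 2) * ‖f‖ := by
    refine (Complex.im_le_norm _).trans ((norm_inner_le_norm z f).trans ?_)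
    gcongr
    refine (hbd z).trans ?_
    rw [hz, norm_smul]
    have := norm_add_le t b
    norm_num
    linarith
  rw [← h6] at h7
  have h8 : hbar * (‖t‖ ^ 2 - ‖b‖ ^ 2) ≤ 3 * (‖t‖ + ‖b‖) * ‖f‖ * tau := by
    have := mul_le_mul_of_nonneg_right h7 (by positivity : 0 ≤ 2 * tau)
    have e : hbar / tau * ((‖t‖ ^ 2 - ‖b‖ ^ 2) / 2) * (2 * tau)
      = hbar * (‖t‖ ^ 2 - ‖b‖ ^ 2) := by field_simp
    linarith
  by_contra! hlt
  have h9 : 3 * (‖f‖ * tau) < hbar * (‖t‖ - ‖b‖) := by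
    have := mul_lt_mul_of_pos_left hlt hh
    have e : hbar * (‖b‖ + 3 / hbar * (‖f‖ * tau)) = hbar * ‖b‖ + 3 * (‖f‖ * tau) := by
      field_simp
    linarith
  have hpos : 0 < ‖t‖ + ‖b‖ := by
    have : 0 ≤ 3 / hbar * (‖f‖ * tau) := by positivity
    have := norm_nonneg b
    linarith
  have := mul_lt_mul_of_pos_right h9 hpos
  linarith

/-! ### Partial shifts on `ℓ²` -/

variable {ι : Type*}

theorem pe_sum_le (f : ι ≃. ι) (g : ι → ℝ) (hg : ∀ i, 0 ≤ g i) (hs : Summable g) (s : Finset ι) :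
    ∑ p ∈ s, (f p).elim 0 g ≤ ∑' q, g q := by
  classical
  have : ∑ p ∈ s, (f p).elim 0 g = ∑ p ∈ s.filter (fun p => (f p).isSome), (f p).elim 0 g := by
    rw [Finset.sum_filter]
    refine Finset.sum_congr rfl fun p _ => ?_
    cases h : f p <;> simp
  rw [this]
  have h2 : ∀ p ∈ s.filter (fun p => (f p).isSome), (f p).elim 0 g = g ((f p).getD p) := by
    intro p hp
    obtain ⟨q, hq⟩ := Option.isSome_iff_exists.mp (Finset.mem_filter.mp hp).2
    simp [hq]
  rw [Finset.sum_congr rfl h2, ← Finset.sum_image (g := fun p => (f p).getD p) (f := g)]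
  · exact hs.sum_le_tsum _ fun i _ => hg i
  · intro p hp p' hp' h
    obtain ⟨q, hq⟩ := Option.isSome_iff_exists.mp (Finset.mem_filter.mp hp).2
    obtain ⟨q', hq'⟩ := Option.isSome_iff_exists.mp (Finset.mem_filter.mp hp').2
    simp [hq, hq'] at h
    subst h
    exact f.inj hq hq'

theorem pe_pow (f : ι ≃. ι) (w : lp (fun _ : ι => ℂ) 2) (p : ι) :
    ‖(f p).elim 0 w‖ ^ (2 : ENNReal).toReal
      = (f p).elim 0 (fun q => ‖w q‖ ^ (2 : ENNReal).toReal) := by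
  cases f p <;> simp

theorem pe_le (f : ι ≃. ι) (w : lp (fun _ : ι => ℂ) 2) (s : Finset ι) :
    ∑ p ∈ s, ‖(f p).elim 0 w‖ ^ (2 : ENNReal).toReal ≤ ‖w‖ ^ (2 : ENNReal).toReal := by
  rw [lp.norm_rpow_eq_tsum (by norm_num) w]
  simp only [pe_pow]
  exact pe_sum_le f _ (fun i => by positivity) (lp.memℓp w |>.summable (by norm_num)) s

/-- The composition operator `w ↦ w ∘ f` on `ℓ²` for a partial injection `f`, with value `0` where
`f` is undefined. -/
def pullOp (f : ι ≃. ι) : lp (fun _ : ι => ℂ) 2 →L[ℂ] lp (fun _ : ι => ℂ) 2 :=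
  LinearMap.mkContinuous
    { toFun := fun w => ⟨fun p => (f p).elim 0 w, memℓp_gen' (pe_le f w)⟩
      map_add' := fun u v => by
        ext p
        simp only [lp.coeFn_add, Pi.add_apply]
        cases f p <;> simp
      map_smul' := fun c u => by
        ext p
        simp only [lp.coeFn_smul, Pi.smul_apply]
        cases f p <;> simp } 1
    (fun w => by
      rw [one_mul]
      exact lp.norm_le_of_forall_sum_le (by norm_num) (norm_nonneg _) (pe_le f w))

theorem pullOp_apply (f : ι ≃. ι) (w : lp (fun _ : ι => ℂ) 2) (p : ι) :
    pullOp f w p = (f p).elim 0 w := rfl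

theorem norm_pullOp_le (f : ι ≃. ι) : ‖pullOp f‖ ≤ 1 :=
  LinearMap.mkContinuous_norm_le _ zero_le_one _

theorem pullOp_comm (f g : ι ≃. ι) (h : f.trans g = g.trans f) :
    pullOp f * pullOp g = pullOp g * pullOp f := by
  have key : ∀ (f g : ι ≃. ι) (w : lp (fun _ : ι => ℂ) 2) (p : ι),
      (pullOp f * pullOp g) w p = (f.trans g p).elim 0 w := by
    intro f g w p
    change (f p).elim 0 (fun q => (g q).elim 0 w) = ((f p).bind g).elim 0 w
    cases f p <;> rfl
  ext w p
  rw [key, key, h]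

/-- The adjoint of composition with `f` is composition with the partial inverse of `f`. -/
theorem pullOp_adj (f : ι ≃. ι) (u v : lp (fun _ : ι => ℂ) 2) :
    inner ℂ (pullOp f u) v = inner ℂ u (pullOp f.symm v) := by
  rw [lp.inner_eq_tsum, lp.inner_eq_tsum]
  simp only [pullOp_apply]
  have key : ∀ q : Function.support fun q => inner ℂ (u q) ((f.symm q).elim 0 v),
      ∃ p, f p = some q.1 := by
    rintro ⟨q, hq⟩
    cases h : f.symm q with
    | none => simp [h] at hq
    | some p => exact ⟨p, f.eq_some_iff.mp h⟩
  choose i hi using key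
  refine tsum_eq_tsum_of_ne_zero_bij i ?_ ?_ ?_
  · intro q q' h
    have := hi q
    rw [show i q = i q' from h, hi q'] at this
    exact (Subtype.ext (Option.some.inj this)).symm
  · intro p hp
    cases h : f p with
    | none => simp [h] at hp
    | some q =>
      have h' := f.eq_some_iff.mpr h
      have hq : q ∈ Function.support fun q => inner ℂ (u q) ((f.symm q).elim 0 v) := by
        simpa [h, h'] using hp
      exact ⟨⟨q, hq⟩, f.inj (hi ⟨q, hq⟩) h⟩
  · intro q
    rw [hi q, f.eq_some_iff.mpr (hi q)]
    rfl

/-! ### The second differences as operators on `ℓ²(ℕ × ℕ)` -/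

/-- The node `(j, k)` is interior: `j ≥ 1` and `1 ≤ k ≤ K - 1`. -/
def IsInterior (K : ℕ) (p : ℕ × ℕ) : Prop := 1 ≤ p.1 ∧ 1 ≤ p.2 ∧ p.2 < K

instance (K : ℕ) (p : ℕ × ℕ) : Decidable (IsInterior K p) := by unfold IsInterior; infer_instance

/-- The partial shift `(j, k) ↦ (j + 1, k)` on interior nodes. -/
def shiftX (K : ℕ) : ℕ × ℕ ≃. ℕ × ℕ where
  toFun p := if IsInterior K p then some (p.1 + 1, p.2) else none
  invFun p := if IsInterior K p ∧ 2 ≤ p.1 then some (p.1 - 1, p.2) else none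
  inv := by
    rintro ⟨a, b⟩ ⟨c, d⟩
    simp only [IsInterior]
    grind

/-- The partial shift `(j, k) ↦ (j, k + 1)`, defined where both nodes are interior. -/
def shiftY (K : ℕ) : ℕ × ℕ ≃. ℕ × ℕ where
  toFun p := if IsInterior K p ∧ p.2 + 1 < K then some (p.1, p.2 + 1) else none
  invFun p := if IsInterior K p ∧ 2 ≤ p.2 then some (p.1, p.2 - 1) else none
  inv := by
    rintro ⟨a, b⟩ ⟨c, d⟩
    simp only [IsInterior]
    grind

theorem shiftX_apply (K : ℕ) (p : ℕ × ℕ) :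
    shiftX K p = if IsInterior K p then some (p.1 + 1, p.2) else none := rfl
theorem shiftX_symm_apply (K : ℕ) (p : ℕ × ℕ) :
    (shiftX K).symm p = if IsInterior K p ∧ 2 ≤ p.1 then some (p.1 - 1, p.2) else none := rfl
theorem shiftY_apply (K : ℕ) (p : ℕ × ℕ) :
    shiftY K p = if IsInterior K p ∧ p.2 + 1 < K then some (p.1, p.2 + 1) else none := rfl
theorem shiftY_symm_apply (K : ℕ) (p : ℕ × ℕ) :
    (shiftY K).symm p = if IsInterior K p ∧ 2 ≤ p.2 then some (p.1, p.2 - 1) else none := rfl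

/-- The interior is a product set, so shifts in `x` commute with shifts in `y`, domains
included. -/
theorem shift_comm (K : ℕ) :
    (shiftX K).trans (shiftY K) = (shiftY K).trans (shiftX K) ∧
    (shiftX K).trans (shiftY K).symm = (shiftY K).symm.trans (shiftX K) ∧
    (shiftX K).symm.trans (shiftY K) = (shiftY K).trans (shiftX K).symm ∧
    (shiftX K).symm.trans (shiftY K).symm = (shiftY K).symm.trans (shiftX K).symm := by
  refine ⟨?_, ?_, ?_, ?_⟩ <;>
  · refine PEquiv.ext fun p => Option.ext fun q => ?_
    rw [PEquiv.trans_eq_some, PEquiv.trans_eq_some]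
    simp only [shiftX_apply, shiftX_symm_apply, shiftY_apply, shiftY_symm_apply, IsInterior]
    grind

/-- `h_x²` times the second difference in `x` with zero boundary values. -/
def opX (K : ℕ) : lp (fun _ : ℕ × ℕ => ℂ) 2 →L[ℂ] lp (fun _ : ℕ × ℕ => ℂ) 2 :=
  pullOp (shiftX K) + pullOp (shiftX K).symm - (2 : ℂ) • 1

/-- `h_y²` times the second difference in `y` with zero boundary values. -/
def opY (K : ℕ) : lp (fun _ : ℕ × ℕ => ℂ) 2 →L[ℂ] lp (fun _ : ℕ × ℕ => ℂ) 2 :=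
  pullOp (shiftY K) + pullOp (shiftY K).symm - (2 : ℂ) • 1

/-- The Numerov average `s_N`; the mesh sizes cancel. -/
def opS (K : ℕ) : lp (fun _ : ℕ × ℕ => ℂ) 2 →L[ℂ] lp (fun _ : ℕ × ℕ => ℂ) 2 :=
  1 + (1 / 12 : ℂ) • (opX K + opY K)

/-- The Numerov Laplacian `Δ_{hN}`, with its two mixed terms collected into one. -/
def opD (K : ℕ) (hx hy : ℝ) : lp (fun _ : ℕ × ℕ => ℂ) 2 →L[ℂ] lp (fun _ : ℕ × ℕ => ℂ) 2 :=
  ((1 / hx ^ 2 : ℝ) : ℂ) • opX K + ((1 / hy ^ 2 : ℝ) : ℂ) • opY K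
    + ((1 / 12 * (1 / hx ^ 2 + 1 / hy ^ 2) : ℝ) : ℂ) • (opX K * opY K)

theorem opX_comm_opY (K : ℕ) : Commute (opX K) (opY K) := by
  obtain ⟨h1, h2, h3, h4⟩ := shift_comm K
  have c1 : Commute _ _ := pullOp_comm _ _ h1
  have c2 : Commute _ _ := pullOp_comm _ _ h2
  have c3 : Commute _ _ := pullOp_comm _ _ h3
  have c4 : Commute _ _ := pullOp_comm _ _ h4
  have one (T : lp (fun _ : ℕ × ℕ => ℂ) 2 →L[ℂ] lp (fun _ : ℕ × ℕ => ℂ) 2) :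
      Commute T ((2 : ℂ) • 1) := (Commute.one_right T).smul_right _
  exact ((((c1.add_right c2).sub_right (one _)).add_left
    ((c3.add_right c4).sub_right (one _))).sub_left (one _).symm)

theorem opS_comm_opD (K : ℕ) (hx hy : ℝ) : Commute (opS K) (opD K hx hy) := by
  have hxy := opX_comm_opY K
  have hX : Commute (opX K) (opD K hx hy) :=
    ((((Commute.refl _).smul_right _).add_right (hxy.smul_right _)).add_right
      (((Commute.refl _).mul_right hxy).smul_right _))
  have hY : Commute (opY K) (opD K hx hy) :=
    (((hxy.symm.smul_right _).add_right ((Commute.refl _).smul_right _)).add_right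
      ((hxy.symm.mul_right (Commute.refl _)).smul_right _))
  exact (Commute.one_left _).add_left ((hX.add_left hY).smul_left _)

theorem opX_symm (K : ℕ) (u v) : inner ℂ (opX K u) v = inner ℂ u (opX K v) := by
  have h1 := pullOp_adj (shiftX K) u v
  have h2 := pullOp_adj (shiftX K).symm u v
  rw [PEquiv.symm_symm] at h2
  have h3 : inner ℂ ((2 : ℂ) • u) v = inner ℂ u ((2 : ℂ) • v) := by
    rw [two_smul, two_smul, inner_add_left, inner_add_right]
  change inner ℂ (pullOp _ u + pullOp _ u - (2 : ℂ) • u) v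
    = inner ℂ u (pullOp _ v + pullOp _ v - (2 : ℂ) • v)
  rw [inner_sub_left, inner_add_left, inner_sub_right, inner_add_right, h1, h2, h3]
  ring

theorem opY_symm (K : ℕ) (u v) : inner ℂ (opY K u) v = inner ℂ u (opY K v) := by
  have h1 := pullOp_adj (shiftY K) u v
  have h2 := pullOp_adj (shiftY K).symm u v
  rw [PEquiv.symm_symm] at h2
  have h3 : inner ℂ ((2 : ℂ) • u) v = inner ℂ u ((2 : ℂ) • v) := by
    rw [two_smul, two_smul, inner_add_left, inner_add_right]
  change inner ℂ (pullOp _ u + pullOp _ u - (2 : ℂ) • u) v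
    = inner ℂ u (pullOp _ v + pullOp _ v - (2 : ℂ) • v)
  rw [inner_sub_left, inner_add_left, inner_sub_right, inner_add_right, h1, h2, h3]
  ring

theorem inner_real_smul_left' {E : Type*} [NormedAddCommGroup E] [InnerProductSpace ℂ E] (r : ℝ)
    (u v : E) : inner ℂ ((r : ℂ) • u) v = r * inner ℂ u v := by
  rw [inner_smul_left, Complex.conj_ofReal]

theorem opS_symm (K : ℕ) (u v) : inner ℂ (opS K u) v = inner ℂ u (opS K v) := by
  change inner ℂ (u + (1 / 12 : ℂ) • (opX K u + opY K u)) v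
    = inner ℂ u (v + (1 / 12 : ℂ) • (opX K v + opY K v))
  rw [show (1 / 12 : ℂ) = ((1 / 12 : ℝ) : ℂ) by norm_num]
  rw [inner_add_left, inner_add_right, inner_real_smul_left', inner_smul_right, inner_add_left,
    inner_add_right, opX_symm, opY_symm]

theorem opD_symm (K : ℕ) (hx hy : ℝ) (u v) :
    inner ℂ (opD K hx hy u) v = inner ℂ u (opD K hx hy v) := by
  have hxy : opX K (opY K v) = opY K (opX K v) := congrArg (fun T => T v) (opX_comm_opY K).eq
  change inner ℂ (((1 / hx ^ 2 : ℝ) : ℂ) • opX K u + ((1 / hy ^ 2 : ℝ) : ℂ) • opY K u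
      + ((1 / 12 * (1 / hx ^ 2 + 1 / hy ^ 2) : ℝ) : ℂ) • opX K (opY K u)) v
    = inner ℂ u (((1 / hx ^ 2 : ℝ) : ℂ) • opX K v + ((1 / hy ^ 2 : ℝ) : ℂ) • opY K v
      + ((1 / 12 * (1 / hx ^ 2 + 1 / hy ^ 2) : ℝ) : ℂ) • opX K (opY K v))
  rw [inner_add_left, inner_add_left, inner_add_right, inner_add_right]
  simp only [inner_real_smul_left', inner_smul_right]
  rw [hxy, opX_symm, opY_symm, opX_symm, opY_symm]

/-- `1 - s_N` is `1/3` minus one twelfth of the sum of four contractions. -/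
theorem norm_one_sub_opS (K : ℕ) : ‖1 - opS K‖ ≤ 2 / 3 := by
  have e : 1 - opS K = (1 / 3 : ℂ) • (1 : lp (fun _ : ℕ × ℕ => ℂ) 2 →L[ℂ] _)
      - (1 / 12 : ℂ) • (pullOp (shiftX K) + pullOp (shiftX K).symm
        + (pullOp (shiftY K) + pullOp (shiftY K).symm)) := by
    rw [opS, opX, opY]
    module
  rw [e]
  refine (norm_sub_le _ _).trans ?_
  rw [norm_smul, norm_smul]
  have h1 : ‖(1 : lp (fun _ : ℕ × ℕ => ℂ) 2 →L[ℂ] lp (fun _ : ℕ × ℕ => ℂ) 2)‖ ≤ 1 :=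
    ContinuousLinearMap.norm_id_le
  have h2 := norm_add₄_le (a := pullOp (shiftX K)) (b := pullOp (shiftX K).symm)
    (c := pullOp (shiftY K)) (d := pullOp (shiftY K).symm)
  rw [add_assoc (_ + _)] at h2
  have := norm_pullOp_le (shiftX K)
  have := norm_pullOp_le (shiftX K).symm
  have := norm_pullOp_le (shiftY K)
  have := norm_pullOp_le (shiftY K).symm
  norm_num
  linarith

/-- `s_N` is invertible by the Neumann series. -/
theorem opS_surj (K : ℕ) (u) : ∃ z, opS K z = u := by
  have h : IsUnit (opS K) := by
    have := isUnit_one_sub_of_norm_lt_one (x := 1 - opS K)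
      ((norm_one_sub_opS K).trans_lt (by norm_num))
    rwa [sub_sub_cancel] at this
  obtain ⟨T, hT⟩ := h.exists_right_inv
  exact ⟨T u, congrArg (fun A => A u) hT⟩

theorem norm_le_opS (K : ℕ) (z) : ‖z‖ ≤ 3 * ‖opS K z‖ := by
  have h1 := (1 - opS K).le_of_opNorm_le (norm_one_sub_opS K) z
  have h2 : ‖z‖ ≤ ‖opS K z‖ + ‖(1 - opS K) z‖ := by
    refine le_trans (le_of_eq ?_) (norm_add_le _ _)
    congr 1
    change z = opS K z + (z - opS K z)
    abel
  linarith

/-! ### Mesh functions as elements of `ℓ²` -/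

/-- `w ∈ ℓ²(ℕ × ℕ)` represents the mesh function `W`: they agree on the mesh `0 ≤ k ≤ K`, and `w`
vanishes off the interior. The values of `W` at `k > K` are irrelevant. -/
structure MeshRep (K : ℕ) (W : ℕ → ℕ → ℂ) (w : lp (fun _ : ℕ × ℕ => ℂ) 2) : Prop where
  eq : ∀ j k, k ≤ K → W j k = w (j, k)
  zero : ∀ p, ¬ IsInterior K p → w p = 0

variable {K : ℕ} {W W' : ℕ → ℕ → ℂ} {w w' : lp (fun _ : ℕ × ℕ => ℂ) 2}

theorem MeshRep.ext_interior (h : MeshRep K W w) (h' : MeshRep K W' w')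
    (e : ∀ j k, 1 ≤ j → 1 ≤ k → k ≤ K - 1 → W j k = W' j k) : w = w' := by
  ext p
  by_cases hp : IsInterior K p
  · have hp' := hp
    obtain ⟨h1, h2, h3⟩ := hp'
    have := e p.1 p.2 h1 h2 (by omega)
    rwa [h.eq _ _ h3.le, h'.eq _ _ h3.le] at this
  · rw [h.zero p hp, h'.zero p hp]

theorem MeshRep.add (h : MeshRep K W w) (h' : MeshRep K W' w') :
    MeshRep K (fun j k => W j k + W' j k) (w + w') :=
  ⟨fun j k hk => by simp [h.eq j k hk, h'.eq j k hk],
    fun p hp => by simp [h.zero p hp, h'.zero p hp]⟩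

theorem MeshRep.smul (c : ℂ) (h : MeshRep K W w) : MeshRep K (fun j k => c * W j k) (c • w) :=
  ⟨fun j k hk => by simp [h.eq j k hk], fun p hp => by simp [h.zero p hp]⟩

theorem MeshRep.sub (h : MeshRep K W w) (h' : MeshRep K W' w') :
    MeshRep K (fun j k => W j k - W' j k) (w - w') :=
  ⟨fun j k hk => by simp [h.eq j k hk, h'.eq j k hk],
    fun p hp => by simp [h.zero p hp, h'.zero p hp]⟩

theorem opX_apply (p : ℕ × ℕ) :
    opX K w p = (shiftX K p).elim 0 w + ((shiftX K).symm p).elim 0 w - 2 * w p := rfl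

theorem opY_apply (p : ℕ × ℕ) :
    opY K w p = (shiftY K p).elim 0 w + ((shiftY K).symm p).elim 0 w - 2 * w p := rfl

theorem MeshRep.rep_ddx (hx : ℝ) (h : MeshRep K W w) :
    MeshRep K (ddx K hx W) (((1 / hx ^ 2 : ℝ) : ℂ) • opX K w) := by
  have hz : ∀ p, ¬ IsInterior K p → (((1 / hx ^ 2 : ℝ) : ℂ) • opX K w) p = 0 := by
    intro p hp
    simp [opX_apply, shiftX_apply, shiftX_symm_apply, hp, h.zero p hp]
  refine ⟨fun j k hk => ?_, hz⟩
  by_cases hp : IsInterior K (j, k)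
  · obtain ⟨h1, h2, h3⟩ := id hp
    simp only at h1 h2 h3
    have e : ((shiftX K).symm (j, k)).elim 0 w = w (j - 1, k) := by
      rw [shiftX_symm_apply]
      by_cases hj : 2 ≤ j
      · simp [hp, hj]
      -- For `j = 1` the shift is undefined, matching the boundary value at `j = 0`.
      · rw [h.zero (j - 1, k) (by simp only [IsInterior]; omega)]
        simp [hj]
    change (if _ then _ else _ : ℂ) = ((1 / hx ^ 2 : ℝ) : ℂ) * opX K w (j, k)
    rw [if_neg (by omega), opX_apply, e, shiftX_apply, if_pos hp, h.eq _ _ hk, h.eq _ _ hk,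
      h.eq _ _ hk]
    simp
    ring
  · rw [hz _ hp]
    exact if_pos (by simp only [IsInterior] at hp; omega)

theorem MeshRep.rep_ddy (hy : ℝ) (h : MeshRep K W w) :
    MeshRep K (ddy K hy W) (((1 / hy ^ 2 : ℝ) : ℂ) • opY K w) := by
  have hz : ∀ p, ¬ IsInterior K p → (((1 / hy ^ 2 : ℝ) : ℂ) • opY K w) p = 0 := by
    intro p hp
    simp [opY_apply, shiftY_apply, shiftY_symm_apply, hp, h.zero p hp]
  refine ⟨fun j k hk => ?_, hz⟩
  by_cases hp : IsInterior K (j, k)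
  · obtain ⟨h1, h2, h3⟩ := id hp
    simp only at h1 h2 h3
    have e : ((shiftY K).symm (j, k)).elim 0 w = w (j, k - 1) := by
      rw [shiftY_symm_apply]
      by_cases hj : 2 ≤ k
      · simp [hp, hj]
      · rw [h.zero (j, k - 1) (by simp only [IsInterior]; omega)]
        simp [hj]
    have e' : (shiftY K (j, k)).elim 0 w = w (j, k + 1) := by
      rw [shiftY_apply]
      by_cases hj : k + 1 < K
      · simp [hp, hj]
      · rw [h.zero (j, k + 1) (by simp only [IsInterior]; omega)]
        simp [hj]
    change (if _ then _ else _ : ℂ) = ((1 / hy ^ 2 : ℝ) : ℂ) * opY K w (j, k)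
    rw [if_neg (by omega), opY_apply, e, e', h.eq j (k + 1) (by omega), h.eq _ _ hk,
      h.eq j (k - 1) (by omega)]
    simp
    ring
  · rw [hz _ hp]
    exact if_pos (by simp only [IsInterior] at hp; omega)

theorem MeshRep.rep_sN {hx hy : ℝ} (hhx : 0 < hx) (hhy : 0 < hy) (h : MeshRep K W w) :
    MeshRep K (sN K hx hy W) (opS K w) := by
  have := (h.add ((h.rep_ddx hx).smul ((hx ^ 2 / 12 : ℝ) : ℂ))).add
    ((h.rep_ddy hy).smul ((hy ^ 2 / 12 : ℝ) : ℂ))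
  convert! this using 1
  change w + (1 / 12 : ℂ) • (opX K w + opY K w) = _
  rw [smul_smul, smul_smul, ← Complex.ofReal_mul, ← Complex.ofReal_mul,
    show hx ^ 2 / 12 * (1 / hx ^ 2) = 1 / 12 by field_simp,
    show hy ^ 2 / 12 * (1 / hy ^ 2) = 1 / 12 by field_simp]
  push_cast
  module

/-- `Δ_{hN}` uses the product of the two second differences in both orders, while `opD` uses only
one; they agree since `opX` and `opY` commute. -/
theorem MeshRep.rep_deltaHN {hx hy : ℝ} (hhx : 0 < hx) (hhy : 0 < hy) (h : MeshRep K W w) :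
    MeshRep K (deltaHN K hx hy W) (opD K hx hy w) := by
  have := ((h.rep_ddx hx).add (((h.rep_ddx hx).rep_ddy hy).smul ((hy ^ 2 / 12 : ℝ) : ℂ))).add
    ((h.rep_ddy hy).add (((h.rep_ddy hy).rep_ddx hx).smul ((hx ^ 2 / 12 : ℝ) : ℂ)))
  convert! this using 1
  have hxy : opX K (opY K w) = opY K (opX K w) := congrArg (fun T => T w) (opX_comm_opY K).eq
  change ((1 / hx ^ 2 : ℝ) : ℂ) • opX K w + ((1 / hy ^ 2 : ℝ) : ℂ) • opY K w
      + ((1 / 12 * (1 / hx ^ 2 + 1 / hy ^ 2) : ℝ) : ℂ) • opX K (opY K w) = _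
  rw [map_smul, map_smul, ← hxy, smul_smul, smul_smul, smul_smul, smul_smul, ← Complex.ofReal_mul,
    ← Complex.ofReal_mul, ← Complex.ofReal_mul, ← Complex.ofReal_mul,
    show hy ^ 2 / 12 * (1 / hy ^ 2) * (1 / hx ^ 2) = 1 / 12 * (1 / hx ^ 2) by field_simp,
    show hx ^ 2 / 12 * (1 / hx ^ 2) * (1 / hy ^ 2) = 1 / 12 * (1 / hy ^ 2) by field_simp,
    mul_add, Complex.ofReal_add]
  module

theorem exists_rep (h : memH K W) : ∃ w, MeshRep K W w := by
  obtain ⟨h0, h1, h2, h3⟩ := h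
  let g : ℕ × ℕ → ℂ := fun p => if IsInterior K p then W p.1 p.2 else 0
  have hrow : ∀ j, ∀ k ∉ Finset.Icc 1 (K - 1), ‖g (j, k)‖ ^ (2 : ENNReal).toReal = 0 := by
    intro j k hk
    have : ¬ IsInterior K (j, k) := by
      simp only [IsInterior, Finset.mem_Icc] at *
      omega
    simp [g, this]
  have hg : Memℓp g 2 := by
    refine memℓp_gen ((summable_prod_of_nonneg fun p => by positivity).mpr ⟨fun j => ?_, ?_⟩)
    · exact summable_of_ne_finset_zero (hrow j)
    · refine h3.congr fun j => ?_
      rw [tsum_eq_sum (hrow j)]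
      refine Finset.sum_congr rfl fun k hk => ?_
      rw [Finset.mem_Icc] at hk
      by_cases hj : j = 0
      · simp [g, hj, h0, IsInterior]
      · have : IsInterior K (j, k) := by
          simp only [IsInterior]
          omega
        simp [g, this]
  refine ⟨⟨g, hg⟩, fun j k hk => ?_, fun p hp => if_neg hp⟩
  change W j k = if _ then _ else _
  split_ifs with hi
  · rfl
  · have : j = 0 ∨ k = 0 ∨ k = K := by
      simp only [IsInterior] at hi
      omega
    rcases this with rfl | rfl | rfl
    · exact h0 k
    · exact h1 j
    · exact h2 j

theorem MeshRep.nrmH_eq {hx hy : ℝ} (hhx : 0 < hx) (hhy : 0 < hy) (h : MeshRep K W w) :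
    nrmH K hx hy W = Real.sqrt (hx * hy) * ‖w‖ := by
  have hs : Summable fun p => ‖w p‖ ^ 2 := by
    have := (lp.memℓp w).summable (by norm_num)
    simpa using this
  have hn : ‖w‖ ^ 2 = ∑' p, ‖w p‖ ^ 2 := by
    have := lp.norm_rpow_eq_tsum (p := 2) (by norm_num) w
    simpa using this
  have hz : ∀ j, ∀ k ∉ Finset.Icc 1 (K - 1), ‖w (j, k)‖ ^ 2 = 0 := by
    intro j k hk
    rw [h.zero (j, k) (by simp only [IsInterior, Finset.mem_Icc] at *; omega)]
    simp
  have hj : ∀ j, ∑' k, ‖w (j, k)‖ ^ 2 = ∑ k ∈ Finset.Icc 1 (K - 1), ‖W j k‖ ^ 2 := by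
    intro j
    rw [tsum_eq_sum (hz j)]
    refine Finset.sum_congr rfl fun k hk => ?_
    rw [Finset.mem_Icc] at hk
    rw [h.eq j k (by omega)]
  have h0 : ∑' k, ‖w (0, k)‖ ^ 2 = 0 := by
    simp [fun k => h.zero (0, k) (by simp [IsInterior])]
  have hi : innH K hx hy W W = ((hx * hy * ‖w‖ ^ 2 : ℝ) : ℂ) := by
    rw [hn, hs.tsum_prod, hs.prod.tsum_eq_zero_add, h0, zero_add, ← tsum_mul_left,
      Complex.ofReal_tsum]
    refine tsum_congr fun j => ?_
    rw [hj, Finset.mul_sum, Complex.ofReal_sum]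
    refine Finset.sum_congr rfl fun k _ => ?_
    rw [Complex.mul_conj, Complex.normSq_eq_norm_sq]
    push_cast
    ring
  unfold nrmH
  rw [hi, Complex.ofReal_re, Real.sqrt_mul (by positivity), Real.sqrt_sq (norm_nonneg _)]

/-- Multiplication by the bounded real potential `Ṽ_j` keeps a mesh function in the space and is
symmetric, so `(w, Ṽ w)` is real. -/
theorem exists_rep_mul {Vt : ℕ → ℝ} (hVt : ∃ C : ℝ, ∀ j, |Vt j| ≤ C) (h : MeshRep K W w) :
    ∃ v, MeshRep K (fun j k => (Vt j : ℂ) * W j k) v ∧ (inner ℂ w v).im = 0 := by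
  obtain ⟨C, hC⟩ := hVt
  let g : ℕ × ℕ → ℂ := fun p => (Vt p.1 : ℂ) * w p
  have hg : Memℓp g 2 := by
    have hw : Memℓp (fun p => C * ‖w p‖) 2 := (lp.memℓp w).norm.const_smul C
    refine hw.mono fun p => ?_
    change ‖(Vt p.1 : ℂ) * w p‖ ≤ C * ‖w p‖
    rw [norm_mul, Complex.norm_real]
    exact mul_le_mul_of_nonneg_right (hC p.1) (norm_nonneg _)
  refine ⟨⟨g, hg⟩, ⟨fun j k hk => ?_, fun p hp => ?_⟩, ?_⟩
  · change _ = (Vt j : ℂ) * w (j, k)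
    rw [h.eq j k hk]
  · change (Vt p.1 : ℂ) * w p = 0
    rw [h.zero p hp, mul_zero]
  · have : inner ℂ w ⟨g, hg⟩ = inner ℂ (⟨g, hg⟩ : lp (fun _ : ℕ × ℕ => ℂ) 2) w := by
      rw [lp.inner_eq_tsum, lp.inner_eq_tsum]
      refine tsum_congr fun p => ?_
      change inner ℂ (w p) ((Vt p.1 : ℂ) * w p) = inner ℂ ((Vt p.1 : ℂ) * w p) (w p)
      simp
      ring
    rw [← Complex.conj_eq_iff_im, inner_conj_symm, this]

/-! ### One time step -/

/-- The half-steps with the potential `ΔV` multiply each nodal value by a Cayley factor of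
modulus one. -/
theorem norm_eq_of_cayley {a b : ℂ} {hbar tau q : ℝ} (hh : 0 < hbar) (ht : 0 < tau)
    (h : Complex.I * (hbar : ℂ) * (a - b) / ((tau / 2 : ℝ) : ℂ) = (q : ℂ) * ((a + b) / 2)) :
    ‖a‖ = ‖b‖ := by
  have ht' : (tau : ℂ) ≠ 0 := by exact_mod_cast ht.ne'
  have h1 : a * (-(q * tau / 4 : ℝ) + (hbar : ℝ) * Complex.I)
      = b * ((q * tau / 4 : ℝ) + (hbar : ℝ) * Complex.I) := by
    push_cast at h ⊢
    field_simp at h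
    linear_combination h / 4
  have h2 := congrArg norm h1
  rw [norm_mul, norm_mul, ← Complex.ofReal_neg, Complex.norm_add_mul_I, Complex.norm_add_mul_I,
    neg_sq] at h2
  exact mul_right_cancel₀ (by positivity) h2

theorem nrmH_congr {hx hy : ℝ}
    (e : ∀ j k, 1 ≤ j → 1 ≤ k → k ≤ K - 1 → ‖W j k‖ = ‖W' j k‖) :
    nrmH K hx hy W = nrmH K hx hy W' := by
  unfold nrmH innH
  congr 2
  refine tsum_congr fun j => Finset.sum_congr rfl fun k hk => ?_
  rw [Finset.mem_Icc] at hk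
  rw [Complex.mul_conj, Complex.mul_conj, Complex.normSq_eq_norm_sq, Complex.normSq_eq_norm_sq,
    e (j + 1) k (by omega) hk.1 hk.2]

/-- The Numerov step increases the mesh norm by at most `3 τ ‖F‖ / ℏ`. -/
theorem numerov_step {hx hy hbar ch tau : ℝ} (hhx : 0 < hx) (hhy : 0 < hy) (hhbar : 0 < hbar)
    (htau : 0 < tau) {Vt : ℕ → ℝ} (hVt : ∃ C : ℝ, ∀ j, |Vt j| ≤ C) {T B F : ℕ → ℕ → ℂ}
    (hT : memH K T) (hB : memH K B) (hF : memH K F)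
    (heq : ∀ j k, 1 ≤ j → 1 ≤ k → k ≤ K - 1 →
      Complex.I * (hbar : ℂ) * sN K hx hy (fun j' k' => T j' k' - B j' k') j k / (tau : ℂ)
        = -(ch : ℂ) * deltaHN K hx hy (fun j' k' => (T j' k' + B j' k') / 2) j k
          + sN K hx hy (fun j' k' => (Vt j' : ℂ) * ((T j' k' + B j' k') / 2)) j k + F j k) :
    nrmH K hx hy T ≤ nrmH K hx hy B + 3 / hbar * (nrmH K hx hy F * tau) := by
  obtain ⟨t, ht⟩ := exists_rep hT
  obtain ⟨b, hb⟩ := exists_rep hB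
  obtain ⟨f, hf⟩ := exists_rep hF
  have hu : MeshRep K (fun j k => (T j k + B j k) / 2) ((1 / 2 : ℂ) • (t + b)) := by
    convert! (ht.add hb).smul (1 / 2 : ℂ) using 3
    ring
  obtain ⟨v, hv, hvim⟩ := exists_rep_mul hVt hu
  have key := MeshRep.ext_interior (((ht.sub hb).rep_sN hhx hhy).smul (Complex.I * hbar / tau))
    ((((hu.rep_deltaHN hhx hhy).smul (-(ch : ℂ))).add (hv.rep_sN hhx hhy)).add hf)
    (fun j k h1 h2 h3 => by rw [← heq j k h1 h2 h3]; ring)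
  have := stab_step (opS K) (opD K hx hy) (opS_symm K) (opD_symm K hx hy)
    (fun u => congrArg (fun A => A u) (opS_comm_opD K hx hy).eq) (opS_surj K) (norm_le_opS K)
    t b v f hbar tau ch hhbar htau hvim key
  rw [ht.nrmH_eq hhx hhy, hb.nrmH_eq hhx hhy, hf.nrmH_eq hhx hhy]
  have := mul_le_mul_of_nonneg_left this (Real.sqrt_nonneg (hx * hy))
  linarith

/-! ### Summation over the time steps -/

/-- any solution of the splitting scheme with all members in `H_h` satisfies
the uniform-in-time `L²`-stability bound
`max_{0 ≤ m ≤ M} ‖Ψ^m‖ ≤ ‖Ψ⁰_h‖ + (6/ℏ) ∑_{m=1}^M ‖F^m‖ τ_m`. -/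
theorem stmt5 (K : ℕ) (hK : 2 ≤ K) (hx hy hbar ch : ℝ)
    (hhx : 0 < hx) (hhy : 0 < hy) (hhbar : 0 < hbar) (hch : 0 < ch)
    (V : ℕ → ℕ → ℝ) (hV : ∃ C : ℝ, ∀ j k, |V j k| ≤ C)
    (Vt : ℕ → ℝ) (hVt : ∃ C : ℝ, ∀ j, |Vt j| ≤ C)
    (tau : ℕ → ℝ) (htau : ∀ m, 1 ≤ m → 0 < tau m)
    (F : ℕ → ℕ → ℕ → ℂ) (hF : ∀ m, 1 ≤ m → memH K (F m))
    (PsiB PsiT Psi : ℕ → ℕ → ℕ → ℂ)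
    (hsol : SplitSol K hx hy hbar ch V Vt tau F PsiB PsiT Psi) :
    ∀ M, 1 ≤ M → ∀ m ≤ M,
      nrmH K hx hy (Psi m)
        ≤ nrmH K hx hy (Psi 0)
          + 6 / hbar * ∑ m' ∈ Finset.Icc 1 M, nrmH K hx hy (F m') * tau m' := by
  obtain ⟨hB, hT, hP, h1, h2, h3⟩ := hsol
  have hnn : ∀ m, 1 ≤ m → 0 ≤ nrmH K hx hy (F m) * tau m := fun m hm =>
    mul_nonneg (Real.sqrt_nonneg _) (htau m hm).le
  have step : ∀ m, 1 ≤ m → nrmH K hx hy (Psi m)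
      ≤ nrmH K hx hy (Psi (m - 1)) + 3 / hbar * (nrmH K hx hy (F m) * tau m) := by
    intro m hm
    rw [nrmH_congr fun j k hj hk hk' =>
        norm_eq_of_cayley hhbar (htau m hm) (h3 m hm j k hj hk hk'),
      ← nrmH_congr fun j k hj hk hk' =>
        norm_eq_of_cayley hhbar (htau m hm) (h1 m hm j k hj hk hk')]
    exact numerov_step hhx hhy hhbar (htau m hm) hVt (hT m hm) (hB m hm) (hF m hm) (h2 m hm)
  have bound : ∀ m, nrmH K hx hy (Psi m) ≤ nrmH K hx hy (Psi 0)
      + 3 / hbar * ∑ m' ∈ Finset.Icc 1 m, nrmH K hx hy (F m') * tau m' := by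
    intro m
    induction m with
    | zero => simp
    | succ n ih =>
      rw [Finset.sum_Icc_succ_top (by omega), mul_add]
      have := step (n + 1) (by omega)
      rw [Nat.add_sub_cancel] at this
      linarith
  intro M _ m hm
  refine (bound m).trans ?_
  have hsum : ∑ m' ∈ Finset.Icc 1 m, nrmH K hx hy (F m') * tau m'
      ≤ ∑ m' ∈ Finset.Icc 1 M, nrmH K hx hy (F m') * tau m' :=
    Finset.sum_le_sum_of_subset_of_nonneg (Finset.Icc_subset_Icc_right hm)
      fun i hi _ => hnn i (Finset.mem_Icc.mp hi).1
  have hpos : 0 ≤ ∑ m' ∈ Finset.Icc 1 m, nrmH K hx hy (F m') * tau m' :=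
    Finset.sum_nonneg fun i hi => hnn i (Finset.mem_Icc.mp hi).1
  gcongr
  norm_num
end
end
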